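/- arXiv:2105.02450 — 5 statements merged into one kernel-verified Lean document; each statement's English description precedes it below -/
import Mathlib

section
/- (Lemma 1, viability of the constraint set) Along the distributed projection-free dynamics, if every initial decision variable satisfies x_i(0) ∈ Ω, then x_i(t) ∈ Ω for all t ≥ 0 and all agents i ∈ {1,…,N}. -/
open Filter MeasureTheory
open scoped RealInnerProductSpace

/-- A first-crossing argument for finitely many scalar functions. -/
theorem scalar_first_crossing {N : ℕ} (g : Fin N → ℝ → ℝ) (g' : Fin N → ℝ → ℝ)
    (hg : ∀ i, ∀ t ≥ (0:ℝ), HasDerivAt (g i) (g' i t) t)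
    (h0 : ∀ i, g i 0 < 0)
    (hneg : ∀ i, ∀ t ≥ (0:ℝ), (∀ j, g j t ≤ 0) → g i t = 0 → g' i t < 0) :
    ∀ i, ∀ t ≥ (0:ℝ), g i t < 0 := by
  intro i T hT
  by_contra hcon
  push Not at hcon
  have hcont : ∀ j, ContinuousOn (g j) (Set.Icc 0 T) := fun j t ht =>
    (hg j t ht.1).continuousAt.continuousWithinAt
  have hcl : IsClosed (⋃ j, (Set.Icc 0 T ∩ g j ⁻¹' Set.Ici 0)) :=
    isClosed_iUnion_of_finite fun j =>
      (hcont j).preimage_isClosed_of_isClosed isClosed_Icc isClosed_Ici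
  have hcpt : IsCompact (⋃ j, (Set.Icc 0 T ∩ g j ⁻¹' Set.Ici 0)) :=
    isCompact_Icc.of_isClosed_subset hcl (Set.iUnion_subset fun j => Set.inter_subset_left)
  obtain ⟨t, ht, hleast⟩ := hcpt.exists_isLeast
    ⟨T, Set.mem_iUnion.2 ⟨i, ⟨hT, le_rfl⟩, hcon⟩⟩
  obtain ⟨k, ⟨ht0, htT⟩, hk⟩ := Set.mem_iUnion.1 ht
  have hk : 0 ≤ g k t := hk
  have htpos : 0 < t := by
    rcases ht0.lt_or_eq with h | h
    · exact h
    · have := h0 k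
      rw [h] at this
      linarith
  have hbefore : ∀ s, 0 ≤ s → s < t → ∀ j, g j s < 0 := by
    intro s hs hst j
    by_contra hc
    push Not at hc
    have := hleast (Set.mem_iUnion.2 ⟨j, ⟨hs, hst.le.trans htT⟩, hc⟩)
    linarith
  have hev : ∀ᶠ s in nhdsWithin t (Set.Iio t), 0 ≤ s ∧ s < t := by
    have := Ioo_mem_nhdsLT htpos
    filter_upwards [this] with s hs using ⟨hs.1.le, hs.2⟩
  have hle : ∀ j, g j t ≤ 0 := by
    intro j
    have h1 : Tendsto (g j) (nhdsWithin t (Set.Iio t)) (nhds (g j t)) :=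
      (hg j t ht0).continuousAt.tendsto.mono_left nhdsWithin_le_nhds
    refine le_of_tendsto h1 ?_
    filter_upwards [hev] with s hs using (hbefore s hs.1 hs.2 j).le
  have hk0 : g k t = 0 := le_antisymm (hle k) hk
  have hd := hneg k t ht0 hle hk0
  have hsl := (hasDerivAt_iff_tendsto_slope.1 (hg k t ht0)).mono_left
    (nhdsWithin_mono t (show Set.Iio t ⊆ {t}ᶜ from fun s hs => ne_of_lt hs))
  have hsl' := hsl.eventually (gt_mem_nhds hd)
  obtain ⟨s, h1, h2, h3⟩ := (hsl'.and hev).exists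
  rw [slope_def_field, hk0] at h1
  have := hbefore s h2 h3 k
  have : 0 < (g k s - 0) / (s - t) := div_pos_of_neg_of_neg (by linarith) (by linarith)
  linarith

/-- Lemma 1 (viability of the constraint set): along the distributed
projection-free dynamics (Algorithm 1), if every initial decision variable
satisfies `x i 0 ∈ Ω`, then `x i t ∈ Ω` for all `t ≥ 0` and all agents `i`. -/
theorem lemma1_viability
    (n N : ℕ) (hN : 0 < N)
    (a : Fin N → Fin N → ℝ)
    (ha_nonneg : ∀ i j, 0 ≤ a i j)
    (ha_conn : ∀ i j : Fin N, Relation.ReflTransGen (fun p q => 0 < a q p) i j)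
    (ha_bal : ∀ i, ∑ j, a i j = ∑ j, a j i)
    (Ω : Set (EuclideanSpace ℝ (Fin n)))
    (hΩconv : Convex ℝ Ω) (hΩcpt : IsCompact Ω) (hΩne : Ω.Nonempty)
    (f : Fin N → EuclideanSpace ℝ (Fin n) → ℝ) (κ : ℝ) (hκ : 0 < κ)
    (hfconv : ∀ i, ConvexOn ℝ Set.univ (f i))
    (hfdiff : ∀ i, Differentiable ℝ (f i))
    (hflip : ∀ i, ∀ p ∈ Ω, ∀ q ∈ Ω,
      ‖gradient (f i) p - gradient (f i) q‖ ≤ κ * ‖p - q‖)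
    (β : ℝ → ℝ)
    (hβpos : ∀ t ≥ (0:ℝ), 0 < β t)
    (hβ0 : Tendsto β atTop (nhds 0))
    (hβdiv : Tendsto (fun t => ∫ τ in (0:ℝ)..t, β τ) atTop atTop)
    (x y z v : Fin N → ℝ → EuclideanSpace ℝ (Fin n))
    (hx : ∀ i, ∀ t ≥ (0:ℝ), HasDerivAt (x i)
      (∑ j, a i j • (x j t - x i t) + β t • (v i t - x i t)) t)
    (hy : ∀ i, ∀ t ≥ (0:ℝ), HasDerivAt (y i) (∑ j, a i j • (z j t - z i t)) t)
    (hz : ∀ i, ∀ t ≥ (0:ℝ), z i t = y i t + gradient (f i) (x i t))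
    (hv : ∀ i, ∀ t ≥ (0:ℝ), v i t ∈ Ω ∧ ∀ w ∈ Ω, ⟪z i t, v i t⟫ ≤ ⟪z i t, w⟫)
    (hx0 : ∀ i, x i 0 ∈ Ω) (hy0 : ∀ i, y i 0 = 0) :
    ∀ i, ∀ t ≥ (0:ℝ), x i t ∈ Ω := by
  intro i t ht
  by_contra hcon
  obtain ⟨p, u, hp, hu⟩ := geometric_hahn_banach_closed_point hΩconv hΩcpt.isClosed hcon
  have key := scalar_first_crossing (fun i t => p (x i t) - u)
    (fun i t => p (∑ j, a i j • (x j t - x i t) + β t • (v i t - x i t)))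
    (fun i t ht => (p.hasFDerivAt.comp_hasDerivAt t (hx i t ht)).sub_const u)
    (fun i => by simpa using hp _ (hx0 i)) ?_ i t ht
  · linarith
  · intro i t ht hle h0
    simp only [map_add, map_sum, map_smul, map_sub, smul_eq_mul]
    have h1 : ∑ j, a i j * (p (x j t) - p (x i t)) ≤ 0 :=
      Finset.sum_nonpos fun j _ =>
        mul_nonpos_of_nonneg_of_nonpos (ha_nonneg i j) (by linarith [hle j])
    have h2 : β t * (p (v i t) - p (x i t)) < 0 :=
      mul_neg_of_pos_of_neg (hβpos t ht) (by linarith [hp _ (hv i t ht).1])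
    linarith
end

section
/- (Theorem 1(i), consensus) Along the distributed projection-free dynamics with initial conditions x_i(0) ∈ Ω and y_i(0) = 0, all decision variables achieve consensus: for every pair of agents i, j ∈ {1,…,N}, x_i(t) − x_j(t) → 0 as t → ∞. -/
open Filter MeasureTheory
open scoped RealInnerProductSpace

lemma gron_aux (V V' : ℝ → ℝ) (c : ℝ) (hc : 0 < c) (hV0 : ∀ t, 0 ≤ V t)
    (hd : ∀ t ≥ (0:ℝ), HasDerivAt V (V' t) t)
    (hle : ∀ δ > 0, ∃ T ≥ (0:ℝ), ∀ t ≥ T, V' t ≤ -c * V t + δ) :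
    Tendsto V atTop (nhds 0) := by
  rw [tendsto_order]
  refine ⟨fun b hb => Eventually.of_forall fun t => lt_of_lt_of_le hb (hV0 t), fun ε hε => ?_⟩
  obtain ⟨T, hT0, hT⟩ := hle (c * (ε / 2)) (by positivity)
  have hder : ∀ t ≥ T, HasDerivAt (fun t => Real.exp (c * t) * (V t - ε / 2))
      (Real.exp (c * t) * (c * (V t - ε / 2) + V' t)) t := by
    intro t ht
    have h1 : HasDerivAt (fun t : ℝ => Real.exp (c * t)) (Real.exp (c * t) * (c * 1)) t :=
      ((hasDerivAt_id t).const_mul c).exp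
    exact (h1.fun_mul ((hd t (by linarith)).sub_const (ε / 2))).congr_deriv (by ring)
  have hanti : AntitoneOn (fun t => Real.exp (c * t) * (V t - ε / 2)) (Set.Ici T) := by
    apply antitoneOn_of_deriv_nonpos (convex_Ici T)
    · exact fun t ht => (hder t ht).continuousAt.continuousWithinAt
    · intro t ht
      rw [interior_Ici] at ht
      exact (hder t (le_of_lt ht)).differentiableAt.differentiableWithinAt
    · intro t ht
      rw [interior_Ici] at ht
      rw [(hder t (le_of_lt ht)).deriv]
      have := hT t (le_of_lt ht)
      exact mul_nonpos_of_nonneg_of_nonpos (Real.exp_pos _).le (by linarith)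
  have hexp : Tendsto (fun t : ℝ => Real.exp (c * t) * (ε / 2)) atTop atTop :=
    (Real.tendsto_exp_atTop.comp (tendsto_id.const_mul_atTop hc)).atTop_mul_const (by positivity)
  filter_upwards [eventually_ge_atTop T,
    hexp.eventually_gt_atTop (Real.exp (c * T) * (V T - ε / 2))] with t ht h
  have h1 := hanti (Set.mem_Ici.2 le_rfl) (Set.mem_Ici.2 ht) ht
  have h2 : Real.exp (c * t) * (V t - ε / 2) < Real.exp (c * t) * (ε / 2) := lt_of_le_of_lt h1 h
  have := lt_of_mul_lt_mul_left h2 (Real.exp_pos _).le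
  linarith

section
variable {E : Type*} [NormedAddCommGroup E] [InnerProductSpace ℝ E]

lemma path_aux {N : ℕ} (a : Fin N → Fin N → ℝ) (ha : ∀ i j, 0 ≤ a i j) (i j : Fin N)
    (h : Relation.ReflTransGen (fun p q => 0 < a q p) i j) :
    ∃ C : ℝ, 0 ≤ C ∧ ∀ e : Fin N → E,
      ‖e i - e j‖ ^ 2 ≤ C * ∑ p, ∑ q, a p q * ‖e q - e p‖ ^ 2 := by
  induction h with
  | refl => exact ⟨0, le_rfl, fun e => by simp⟩
  | @tail b c _ hbc ih =>
    obtain ⟨C, hC, h⟩ := ih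
    refine ⟨2 * C + 2 / a c b, by positivity, fun e => ?_⟩
    have h1 := h e
    have h2 : a c b * ‖e b - e c‖ ^ 2 ≤ ∑ p, ∑ q, a p q * ‖e q - e p‖ ^ 2 := by
      have hn : ∀ p q, 0 ≤ a p q * ‖e q - e p‖ ^ 2 := fun p q =>
        mul_nonneg (ha p q) (sq_nonneg _)
      calc a c b * ‖e b - e c‖ ^ 2 ≤ ∑ q, a c q * ‖e q - e c‖ ^ 2 :=
            Finset.single_le_sum (f := fun q => a c q * ‖e q - e c‖ ^ 2)
              (fun q _ => hn c q) (Finset.mem_univ b)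
        _ ≤ _ := Finset.single_le_sum (f := fun p => ∑ q, a p q * ‖e q - e p‖ ^ 2)
              (fun p _ => Finset.sum_nonneg fun q _ => hn p q) (Finset.mem_univ c)
    set D := ∑ p, ∑ q, a p q * ‖e q - e p‖ ^ 2
    have h3 : ‖e b - e c‖ ^ 2 ≤ D / a c b := by
      rw [le_div_iff₀ hbc]; linarith
    have h4 : ‖e i - e c‖ ≤ ‖e i - e b‖ + ‖e b - e c‖ := norm_sub_le_norm_sub_add_norm_sub _ _ _
    have h5 : ‖e i - e c‖ ^ 2 ≤ 2 * ‖e i - e b‖ ^ 2 + 2 * ‖e b - e c‖ ^ 2 := by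
      nlinarith [norm_nonneg (e i - e c), sq_nonneg (‖e i - e b‖ - ‖e b - e c‖)]
    calc _ ≤ _ := h5
      _ ≤ 2 * (C * D) + 2 * (D / a c b) := by linarith
      _ = _ := by ring

lemma poincare_aux {N : ℕ} (a : Fin N → Fin N → ℝ) (ha : ∀ i j, 0 ≤ a i j)
    (h : ∀ i j : Fin N, Relation.ReflTransGen (fun p q => 0 < a q p) i j) :
    ∃ C : ℝ, 0 < C ∧ ∀ e : Fin N → E,
      ∑ i, ∑ j, ‖e i - e j‖ ^ 2 ≤ C * ∑ p, ∑ q, a p q * ‖e q - e p‖ ^ 2 := by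
  choose C hC hh using fun i j => path_aux (E := E) a ha i j (h i j)
  refine ⟨(∑ i, ∑ j, C i j) + 1, ?_, fun e => ?_⟩
  · have : 0 ≤ ∑ i, ∑ j, C i j := Finset.sum_nonneg fun i _ => Finset.sum_nonneg fun j _ => hC i j
    linarith
  · have hD : 0 ≤ ∑ p, ∑ q, a p q * ‖e q - e p‖ ^ 2 :=
      Finset.sum_nonneg fun p _ => Finset.sum_nonneg fun q _ =>
        mul_nonneg (ha p q) (sq_nonneg _)
    calc _ ≤ ∑ i, ∑ j, C i j * ∑ p, ∑ q, a p q * ‖e q - e p‖ ^ 2 :=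
          Finset.sum_le_sum fun i _ => Finset.sum_le_sum fun j _ => hh i j e
      _ = (∑ i, ∑ j, C i j) * ∑ p, ∑ q, a p q * ‖e q - e p‖ ^ 2 := by
          simp only [Finset.sum_mul]
      _ ≤ _ := by rw [add_mul]; linarith

lemma bal_aux {N : ℕ} (a : Fin N → Fin N → ℝ) (hb : ∀ i, ∑ j, a i j = ∑ j, a j i)
    (g : Fin N → ℝ) : ∑ i, ∑ j, a i j * g j = ∑ i, ∑ j, a i j * g i := by
  rw [Finset.sum_comm]
  simp only [← Finset.sum_mul, hb]

lemma lap_sum_aux {N : ℕ} (a : Fin N → Fin N → ℝ) (hb : ∀ i, ∑ j, a i j = ∑ j, a j i)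
    (e : Fin N → E) : ∑ i, ∑ j, a i j • (e j - e i) = 0 := by
  simp only [smul_sub, Finset.sum_sub_distrib]
  rw [Finset.sum_comm]
  simp only [← Finset.sum_smul, hb, sub_self]

lemma lap_inner_aux {N : ℕ} (a : Fin N → Fin N → ℝ) (hb : ∀ i, ∑ j, a i j = ∑ j, a j i)
    (e : Fin N → E) : 2 * ∑ i, ⟪e i, ∑ j, a i j • (e j - e i)⟫ =
      - ∑ i, ∑ j, a i j * ‖e j - e i‖ ^ 2 := by
  have h := bal_aux a hb (fun i => ‖e i‖ ^ 2)
  have h1 : ∀ i j, a i j * ‖e j - e i‖ ^ 2 = a i j * ‖e j‖ ^ 2 - a i j * ‖e i‖ ^ 2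
      - 2 * (a i j * ⟪e i, e j - e i⟫) := by
    intro i j
    rw [norm_sub_sq_real, inner_sub_right, real_inner_self_eq_norm_sq, real_inner_comm (e i) (e j)]
    ring
  simp only [h1, Finset.sum_sub_distrib, inner_sum, inner_smul_right, ← Finset.mul_sum]
  linarith

lemma pair_aux {N : ℕ} (e L : Fin N → E) (hL : ∑ i, L i = 0) :
    ∑ i, ∑ j, ⟪e i - e j, L i - L j⟫ = 2 * N * ∑ i, ⟪e i, L i⟫ := by
  have h1 : ∑ i, ∑ j, ⟪e j, L i⟫ = 0 := by
    rw [Finset.sum_comm]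
    simp only [← inner_sum, hL, inner_zero_right, Finset.sum_const_zero]
  have h2 : ∑ i, ∑ j, ⟪e i, L j⟫ = 0 := by
    simp only [← inner_sum, hL, inner_zero_right, Finset.sum_const_zero]
  have h3 : ∑ i, ∑ _j : Fin N, ⟪e i, L i⟫ = N * ∑ i, ⟪e i, L i⟫ := by
    simp [Finset.mul_sum]
  have h4 : ∑ _i : Fin N, ∑ j, ⟪e j, L j⟫ = N * ∑ i, ⟪e i, L i⟫ := by
    simp
  simp only [inner_sub_left, inner_sub_right, Finset.sum_sub_distrib]
  rw [h1, h2, h3, h4]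
  ring
end

/-- Theorem 1(i) (consensus): along the distributed projection-free dynamics
(Algorithm 1) with initial conditions `x i 0 ∈ Ω` and `y i 0 = 0`, all
decision variables achieve consensus: `x i t - x j t → 0` as `t → ∞`. -/
theorem theorem1_i_consensus
    (n N : ℕ) (hN : 0 < N)
    (a : Fin N → Fin N → ℝ)
    (ha_nonneg : ∀ i j, 0 ≤ a i j)
    (ha_conn : ∀ i j : Fin N, Relation.ReflTransGen (fun p q => 0 < a q p) i j)
    (ha_bal : ∀ i, ∑ j, a i j = ∑ j, a j i)
    (Ω : Set (EuclideanSpace ℝ (Fin n)))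
    (hΩconv : Convex ℝ Ω) (hΩcpt : IsCompact Ω) (hΩne : Ω.Nonempty)
    (f : Fin N → EuclideanSpace ℝ (Fin n) → ℝ) (κ : ℝ) (hκ : 0 < κ)
    (hfconv : ∀ i, ConvexOn ℝ Set.univ (f i))
    (hfdiff : ∀ i, Differentiable ℝ (f i))
    (hflip : ∀ i, ∀ p ∈ Ω, ∀ q ∈ Ω,
      ‖gradient (f i) p - gradient (f i) q‖ ≤ κ * ‖p - q‖)
    (β : ℝ → ℝ)
    (hβpos : ∀ t ≥ (0:ℝ), 0 < β t)
    (hβ0 : Tendsto β atTop (nhds 0))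
    (hβdiv : Tendsto (fun t => ∫ τ in (0:ℝ)..t, β τ) atTop atTop)
    (x y z v : Fin N → ℝ → EuclideanSpace ℝ (Fin n))
    (hx : ∀ i, ∀ t ≥ (0:ℝ), HasDerivAt (x i)
      (∑ j, a i j • (x j t - x i t) + β t • (v i t - x i t)) t)
    (hy : ∀ i, ∀ t ≥ (0:ℝ), HasDerivAt (y i) (∑ j, a i j • (z j t - z i t)) t)
    (hz : ∀ i, ∀ t ≥ (0:ℝ), z i t = y i t + gradient (f i) (x i t))
    (hv : ∀ i, ∀ t ≥ (0:ℝ), v i t ∈ Ω ∧ ∀ w ∈ Ω, ⟪z i t, v i t⟫ ≤ ⟪z i t, w⟫)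
    (hx0 : ∀ i, x i 0 ∈ Ω) (hy0 : ∀ i, y i 0 = 0) :
    ∀ i j : Fin N, Tendsto (fun t => x i t - x j t) atTop (nhds 0) := by
  obtain ⟨C, hC, hP⟩ := poincare_aux (E := EuclideanSpace ℝ (Fin n)) a ha_nonneg ha_conn
  obtain ⟨R, hR⟩ := hΩcpt.isBounded.exists_norm_le
  have hN' : (0:ℝ) < N := by exact_mod_cast hN
  set X' : Fin N → ℝ → EuclideanSpace ℝ (Fin n) := fun i t =>
    ∑ j, a i j • (x j t - x i t) + β t • (v i t - x i t) with hX'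
  have key : Tendsto (fun t => ∑ i, ∑ j, ‖x i t - x j t‖ ^ 2) atTop (nhds 0) := by
    refine gron_aux _ (fun t => ∑ i, ∑ j, 2 * ⟪x i t - x j t, X' i t - X' j t⟫) (2 * N / C)
      (by positivity)
      (fun t => Finset.sum_nonneg fun i _ => Finset.sum_nonneg fun j _ => sq_nonneg _) ?_ ?_
    · intro t ht
      refine HasDerivAt.fun_sum fun i _ => HasDerivAt.fun_sum fun j _ => ?_
      exact ((hx i t ht).sub (hx j t ht)).norm_sq
    · intro δ hδ
      set K : ℝ := N * N * (2 * R ^ 2) + 1 with hK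
      have hKpos : 0 < K := by positivity
      obtain ⟨T, hT⟩ := eventually_atTop.1 (hβ0.eventually_lt_const (div_pos hδ hKpos))
      refine ⟨max T 0, le_max_right _ _, fun t ht => ?_⟩
      have ht0 : 0 ≤ t := (le_max_right _ _).trans ht
      have hβt := hT t ((le_max_left _ _).trans ht)
      have hβp := hβpos t ht0
      have hKβ : K * β t ≤ δ := by
        rw [lt_div_iff₀ hKpos] at hβt
        linarith
      have e1 : ∀ i j, 2 * ⟪x i t - x j t, X' i t - X' j t⟫ ≤
          2 * ⟪x i t - x j t, (∑ k, a i k • (x k t - x i t)) - ∑ k, a j k • (x k t - x j t)⟫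
            + β t * (2 * R ^ 2) := by
        intro i j
        have hv1 := hR _ (hv i t ht0).1
        have hv2 := hR _ (hv j t ht0).1
        have hd : X' i t - X' j t =
            ((∑ k, a i k • (x k t - x i t)) - ∑ k, a j k • (x k t - x j t))
              + β t • ((v i t - v j t) - (x i t - x j t)) := by
          simp only [hX', smul_sub]
          abel
        rw [hd, inner_add_right, inner_smul_right,
          inner_sub_right _ (v i t - v j t) (x i t - x j t), real_inner_self_eq_norm_sq]
        have h1 := real_inner_le_norm (x i t - x j t) (v i t - v j t)
        have h2 : ‖v i t - v j t‖ ≤ 2 * R := (norm_sub_le _ _).trans (by linarith)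
        have h3 : ⟪x i t - x j t, v i t - v j t⟫ - ‖x i t - x j t‖ ^ 2 ≤ R ^ 2 := by
          nlinarith [mul_le_mul_of_nonneg_left h2 (norm_nonneg (x i t - x j t)),
            sq_nonneg (‖x i t - x j t‖ - R)]
        nlinarith [mul_le_mul_of_nonneg_left h3 hβp.le]
      have e2 : ∑ i, ∑ j, 2 * ⟪x i t - x j t, X' i t - X' j t⟫ ≤
          2 * (∑ i, ∑ j, ⟪x i t - x j t,
            (∑ k, a i k • (x k t - x i t)) - ∑ k, a j k • (x k t - x j t)⟫)
            + N * N * (β t * (2 * R ^ 2)) := by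
        refine (Finset.sum_le_sum fun i _ => Finset.sum_le_sum fun j _ => e1 i j).trans (le_of_eq ?_)
        simp only [Finset.sum_add_distrib, ← Finset.mul_sum]
        simp
        ring
      rw [pair_aux (fun i => x i t) (fun i => ∑ k, a i k • (x k t - x i t))
        (lap_sum_aux a ha_bal fun i => x i t)] at e2
      have e3 := lap_inner_aux a ha_bal (fun i => x i t)
      have e4 := hP (fun i => x i t)
      set D := ∑ p, ∑ q, a p q * ‖x q t - x p t‖ ^ 2
      set V := ∑ i, ∑ j, ‖x i t - x j t‖ ^ 2
      have e5 : 2 * N / C * V ≤ 2 * N * D := by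
        calc 2 * N / C * V ≤ 2 * N / C * (C * D) := by gcongr
          _ = 2 * N * D := by field_simp
      have e6 : 2 * (2 * (N:ℝ) * ∑ i, ⟪x i t, ∑ k, a i k • (x k t - x i t)⟫) = - (2 * N * D) := by
        linear_combination (2 * (N:ℝ)) * e3
      rw [e6] at e2
      have e7 : N * N * (β t * (2 * R ^ 2)) ≤ K * β t := by
        rw [hK]; nlinarith
      linarith
  intro i j
  rw [tendsto_zero_iff_norm_tendsto_zero]
  have hs : Tendsto (fun t => ‖x i t - x j t‖ ^ 2) atTop (nhds 0) := by
    refine squeeze_zero (fun t => sq_nonneg _) (fun t => ?_) key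
    calc ‖x i t - x j t‖ ^ 2 ≤ ∑ q, ‖x i t - x q t‖ ^ 2 :=
          Finset.single_le_sum (f := fun q => ‖x i t - x q t‖ ^ 2)
            (fun q _ => sq_nonneg _) (Finset.mem_univ j)
      _ ≤ _ := Finset.single_le_sum (f := fun p => ∑ q, ‖x p t - x q t‖ ^ 2)
            (fun p _ => Finset.sum_nonneg fun q _ => sq_nonneg _) (Finset.mem_univ i)
  have h := hs.sqrt
  simpa [Real.sqrt_sq (norm_nonneg _)] using h
end

section
/- (Theorem 1(ii), global gradient tracking) Along the distributed projection-free dynamics with initial conditions x_i(0) ∈ Ω and y_i(0) = 0, each auxiliary variable z_i asymptotically tracks the global gradient: for every agent i ∈ {1,…,N}, z_i(t) − (1/N)∑_{j=1}^N ∇f_j(x_j(t)) → 0 as t → ∞. -/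
open Filter MeasureTheory
open scoped RealInnerProductSpace

/-- Scalar comparison: `V' ≤ -c V + r` with `r → 0` forces `V → 0`. -/
lemma gt_decay (V V' r : ℝ → ℝ) (c : ℝ) (hc : 0 < c) (hV0 : ∀ t, 0 ≤ V t)
    (hV : ∀ t ≥ (0:ℝ), HasDerivAt V (V' t) t)
    (hle : ∀ t ≥ (0:ℝ), V' t ≤ -c * V t + r t) (hr : Tendsto r atTop (nhds 0)) :
    Tendsto V atTop (nhds 0) := by
  rw [Metric.tendsto_atTop]
  intro ε hε
  have h1 : ∀ᶠ t in atTop, r t < c * (ε / 2) := hr.eventually_lt_const (by positivity)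
  obtain ⟨T, hT⟩ := (h1.and (eventually_ge_atTop (0:ℝ))).exists_forall_of_atTop
  have hT0 : 0 ≤ T := (hT T le_rfl).2
  let W : ℝ → ℝ := fun t => (V t - ε / 2) * Real.exp (c * t)
  have hW : ∀ t ≥ T, HasDerivAt W
      (V' t * Real.exp (c * t) + (V t - ε / 2) * (Real.exp (c * t) * c)) t := by
    intro t ht
    have h2 : HasDerivAt (fun s => Real.exp (c * s)) (Real.exp (c * t) * c) t := by
      have := ((hasDerivAt_id t).const_mul c).exp
      simpa using this
    exact ((hV t (hT0.trans ht)).sub_const (ε / 2)).mul h2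
  have hanti : AntitoneOn W (Set.Ici T) := by
    apply antitoneOn_of_deriv_nonpos (convex_Ici T)
    · intro t ht
      exact (hW t ht).continuousAt.continuousWithinAt
    · intro t ht
      rw [interior_Ici] at ht
      exact (hW t (le_of_lt ht)).differentiableAt.differentiableWithinAt
    · intro t ht
      rw [interior_Ici] at ht
      have ht' : t ≥ T := le_of_lt ht
      rw [(hW t ht').deriv]
      have e1 := hle t (hT0.trans ht')
      have e2 := (hT t ht').1
      have e3 := Real.exp_pos (c * t)
      have : V' t + (V t - ε / 2) * c ≤ 0 := by nlinarith
      nlinarith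
  have hlim : Tendsto (fun t => W T * Real.exp (-(c * t))) atTop (nhds 0) := by
    have : Tendsto (fun t => Real.exp (-(c * t))) atTop (nhds 0) :=
      Real.tendsto_exp_neg_atTop_nhds_zero.comp (tendsto_id.const_mul_atTop hc)
    simpa using this.const_mul (W T)
  obtain ⟨S, hS⟩ := (hlim.eventually_lt_const (half_pos hε)).exists_forall_of_atTop
  refine ⟨max S T, fun t ht => ?_⟩
  have h3 := hanti (Set.mem_Ici.2 le_rfl) (Set.mem_Ici.2 ((le_max_right S T).trans ht))
    ((le_max_right S T).trans ht)
  have h4 := hS t ((le_max_left S T).trans ht)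
  have h5 : V t - ε / 2 ≤ W T * Real.exp (-(c * t)) := by
    have : W t * Real.exp (-(c * t)) = V t - ε / 2 := by
      simp only [W]
      rw [mul_assoc, ← Real.exp_add]; simp
    rw [← this]
    exact mul_le_mul_of_nonneg_right h3 (Real.exp_pos _).le
  rw [Real.dist_eq, sub_zero, abs_of_nonneg (hV0 t)]
  linarith

section
variable {E : Type*} [NormedAddCommGroup E] [InnerProductSpace ℝ E]

/-- Disagreement energy controls each pairwise difference. -/
lemma gt_pair {N : ℕ} (a : Fin N → Fin N → ℝ) (ha : ∀ i j, 0 ≤ a i j) (i j : Fin N)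
    (h : Relation.ReflTransGen (fun p q => 0 < a q p) i j) :
    ∃ C : ℝ, 0 ≤ C ∧ ∀ u : Fin N → E,
      ‖u i - u j‖ ^ 2 ≤ C * ∑ k, ∑ l, a k l * ‖u k - u l‖ ^ 2 := by
  induction h with
  | refl => exact ⟨0, le_rfl, fun u => by simp⟩
  | @tail b c _ hbc ih =>
    obtain ⟨C, hC, hu⟩ := ih
    refine ⟨2 * C + 2 / a c b, by positivity, fun u => ?_⟩
    set Q := ∑ k, ∑ l, a k l * ‖u k - u l‖ ^ 2 with hQ
    have h1 : a c b * ‖u c - u b‖ ^ 2 ≤ Q := by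
      refine le_trans ?_ (Finset.single_le_sum (f := fun k => ∑ l, a k l * ‖u k - u l‖ ^ 2)
        (fun k _ => Finset.sum_nonneg fun l _ => mul_nonneg (ha k l) (sq_nonneg _))
        (Finset.mem_univ c))
      exact Finset.single_le_sum (f := fun l => a c l * ‖u c - u l‖ ^ 2)
        (fun l _ => mul_nonneg (ha c l) (sq_nonneg _)) (Finset.mem_univ b)
    have h2 : ‖u c - u b‖ ^ 2 ≤ Q / a c b := by
      rw [le_div_iff₀ hbc]; linarith
    have h3 : ‖u i - u c‖ ≤ ‖u i - u b‖ + ‖u c - u b‖ := by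
      rw [norm_sub_rev (u c)]; exact norm_sub_le_norm_sub_add_norm_sub _ _ _
    have h4 := hu u
    have h5 : ‖u i - u c‖ ^ 2 ≤ 2 * ‖u i - u b‖ ^ 2 + 2 * ‖u c - u b‖ ^ 2 := by
      have := norm_nonneg (u i - u c)
      nlinarith [sq_nonneg (‖u i - u b‖ - ‖u c - u b‖)]
    have h6 : (2 * C + 2 / a c b) * Q = 2 * (C * Q) + 2 * (Q / a c b) := by ring
    rw [h6]; linarith

lemma gt_coercive {N : ℕ} (hN : 0 < N) (a : Fin N → Fin N → ℝ) (ha : ∀ i j, 0 ≤ a i j)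
    (hconn : ∀ i j : Fin N, Relation.ReflTransGen (fun p q => 0 < a q p) i j) :
    ∃ c : ℝ, 0 < c ∧ ∀ u : Fin N → E, ∑ i, u i = 0 →
      c * ∑ i, ‖u i‖ ^ 2 ≤ ∑ k, ∑ l, a k l * ‖u k - u l‖ ^ 2 := by
  choose C hC hu using fun i j => gt_pair (E := E) a ha i j (hconn i j)
  set K : ℝ := ∑ i, ∑ j, C i j with hK
  have hK0 : 0 ≤ K := Finset.sum_nonneg fun i _ => Finset.sum_nonneg fun j _ => hC i j
  have hNR : (0:ℝ) < N := by exact_mod_cast hN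
  refine ⟨2 * N / (K + 1), by positivity, fun u h0 => ?_⟩
  set Q := ∑ k, ∑ l, a k l * ‖u k - u l‖ ^ 2 with hQ
  have hQ0 : 0 ≤ Q := Finset.sum_nonneg fun k _ => Finset.sum_nonneg fun l _ =>
    mul_nonneg (ha k l) (sq_nonneg _)
  have h1 : ∑ i, ∑ j, ‖u i - u j‖ ^ 2 = 2 * N * ∑ i, ‖u i‖ ^ 2 := by
    have e : ∀ i j, ‖u i - u j‖ ^ 2 = ‖u i‖ ^ 2 - 2 * ⟪u i, u j⟫ + ‖u j‖ ^ 2 :=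
      fun i j => norm_sub_sq_real _ _
    simp only [e, Finset.sum_add_distrib, Finset.sum_sub_distrib, ← Finset.mul_sum, ← inner_sum,
      h0, inner_zero_right, Finset.sum_const, Finset.card_univ, Fintype.card_fin, nsmul_eq_mul]
    ring
  have h2 : ∑ i, ∑ j, ‖u i - u j‖ ^ 2 ≤ K * Q := by
    rw [hK, Finset.sum_mul]
    refine Finset.sum_le_sum fun i _ => ?_
    rw [Finset.sum_mul]
    exact Finset.sum_le_sum fun j _ => hu i j u
  rw [div_mul_eq_mul_div, div_le_iff₀ (by positivity)]
  nlinarith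

lemma gt_bal_sum {N : ℕ} (a : Fin N → Fin N → ℝ)
    (hbal : ∀ i, ∑ j, a i j = ∑ j, a j i) (u : Fin N → E) :
    ∑ i, ∑ j, a i j • (u j - u i) = 0 := by
  simp only [smul_sub, Finset.sum_sub_distrib]
  rw [Finset.sum_comm, sub_eq_zero]
  refine Finset.sum_congr rfl fun i _ => ?_
  rw [← Finset.sum_smul, ← Finset.sum_smul, hbal]

lemma gt_bal_energy {N : ℕ} (a : Fin N → Fin N → ℝ)
    (hbal : ∀ i, ∑ j, a i j = ∑ j, a j i) (u : Fin N → E) :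
    2 * ∑ i, ⟪u i, ∑ j, a i j • (u j - u i)⟫ = - ∑ i, ∑ j, a i j * ‖u i - u j‖ ^ 2 := by
  have e : ∀ i j, a i j * ‖u i - u j‖ ^ 2
      = a i j * ‖u j‖ ^ 2 - a i j * ‖u i‖ ^ 2 - 2 * ⟪u i, a i j • (u j - u i)⟫ := by
    intro i j
    rw [norm_sub_sq_real, inner_smul_right, inner_sub_right, real_inner_self_eq_norm_sq]; ring
  have h := gt_bal_sum a hbal (fun i => ‖u i‖ ^ 2)
  simp only [smul_eq_mul, mul_sub, Finset.sum_sub_distrib] at h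
  simp only [e, Finset.sum_sub_distrib, ← Finset.mul_sum, ← inner_sum]
  linarith

/-- Perturbed consensus with vanishing perturbation. -/
lemma gt_consensus {N : ℕ} (hN : 0 < N) (a : Fin N → Fin N → ℝ) (ha : ∀ i j, 0 ≤ a i j)
    (hconn : ∀ i j : Fin N, Relation.ReflTransGen (fun p q => 0 < a q p) i j)
    (hbal : ∀ i, ∑ j, a i j = ∑ j, a j i)
    (w p : Fin N → ℝ → E)
    (hw : ∀ i, ∀ t ≥ (0:ℝ), HasDerivAt (w i) (∑ j, a i j • (w j t - w i t) + p i t) t)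
    (hp : ∀ i, Tendsto (p i) atTop (nhds 0)) (i : Fin N) :
    Tendsto (fun t => w i t - (N:ℝ)⁻¹ • ∑ j, w j t) atTop (nhds 0) := by
  obtain ⟨c, hc, hcoer⟩ := gt_coercive (E := E) hN a ha hconn
  have hNR : (N:ℝ) ≠ 0 := by exact_mod_cast hN.ne'
  let m : ℝ → E := fun t => (N:ℝ)⁻¹ • ∑ j, w j t
  let q : Fin N → ℝ → E := fun i t => p i t - (N:ℝ)⁻¹ • ∑ j, p j t
  let u : Fin N → ℝ → E := fun i t => w i t - m t
  have hq : ∀ i, Tendsto (q i) atTop (nhds 0) := by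
    intro i
    have h1 : Tendsto (fun t => ∑ j, p j t) atTop (nhds (∑ _j : Fin N, (0:E))) :=
      tendsto_finsetSum _ fun j _ => hp j
    simpa using (hp i).sub (h1.const_smul ((N:ℝ)⁻¹))
  have hm : ∀ t ≥ (0:ℝ), HasDerivAt m ((N:ℝ)⁻¹ • ∑ j, p j t) t := by
    intro t ht
    have h1 : HasDerivAt (fun t => ∑ j, w j t)
        (∑ i, (∑ j, a i j • (w j t - w i t) + p i t)) t :=
      HasDerivAt.fun_sum fun j _ => hw j t ht
    rw [Finset.sum_add_distrib, gt_bal_sum a hbal (fun i => w i t), zero_add] at h1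
    exact h1.const_smul _
  have hu : ∀ i, ∀ t ≥ (0:ℝ), HasDerivAt (u i) (∑ j, a i j • (u j t - u i t) + q i t) t := by
    intro i t ht
    have h1 := (hw i t ht).sub (hm t ht)
    have h2 : ∑ j, a i j • (u j t - u i t) + q i t
      = ∑ j, a i j • (w j t - w i t) + p i t - (N:ℝ)⁻¹ • ∑ j, p j t := by
      simp only [u, q, sub_sub_sub_cancel_right]; abel
    rw [h2]; exact h1
  have hu0 : ∀ t, ∑ i, u i t = 0 := by
    intro t
    simp only [u, m, Finset.sum_sub_distrib, Finset.sum_const, Finset.card_univ, Fintype.card_fin]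
    rw [← Nat.cast_smul_eq_nsmul ℝ, smul_smul, mul_inv_cancel₀ hNR, one_smul, sub_self]
  have hV : Tendsto (fun t => ∑ i, ‖u i t‖ ^ 2) atTop (nhds 0) := by
    refine gt_decay _ (fun t => ∑ i, 2 * ⟪u i t, ∑ j, a i j • (u j t - u i t) + q i t⟫)
      (fun t => (2 / c) * ∑ i, ‖q i t‖ ^ 2) (c / 2) (by positivity)
      (fun t => Finset.sum_nonneg fun i _ => sq_nonneg _) ?_ ?_ ?_
    · intro t ht
      exact HasDerivAt.fun_sum fun i _ => (hu i t ht).norm_sq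
    · intro t ht
      have h1 := hcoer (fun i => u i t) (hu0 t)
      have h2 := gt_bal_energy a hbal (fun i => u i t)
      have h3 : ∑ i, 2 * ⟪u i t, q i t⟫ ≤
          ∑ i, ((c / 2) * ‖u i t‖ ^ 2 + (2 / c) * ‖q i t‖ ^ 2) := by
        refine Finset.sum_le_sum fun i _ => ?_
        have h4 := real_inner_le_norm (u i t) (q i t)
        have h5 : (c / 2) * ‖u i t‖ ^ 2 + (2 / c) * ‖q i t‖ ^ 2 - 2 * (‖u i t‖ * ‖q i t‖)
          = (2 / c) * (c / 2 * ‖u i t‖ - ‖q i t‖) ^ 2 := by field_simp; ring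
        have h6 : 0 ≤ (2 / c) * (c / 2 * ‖u i t‖ - ‖q i t‖) ^ 2 := by positivity
        linarith
      simp only [inner_add_right, mul_add, Finset.sum_add_distrib, ← Finset.mul_sum] at h1 h2 h3 ⊢
      linarith
    · have h1 : Tendsto (fun t => ∑ i, ‖q i t‖ ^ 2) atTop (nhds (∑ _i : Fin N, (0:ℝ))) := by
        refine tendsto_finsetSum _ fun j _ => ?_
        simpa using ((hq j).norm).pow 2
      simpa using h1.const_mul (2 / c)
  have h1 : Tendsto (fun t => ‖u i t‖ ^ 2) atTop (nhds 0) :=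
    squeeze_zero (fun t => sq_nonneg _) (fun t => Finset.single_le_sum
      (f := fun i => ‖u i t‖ ^ 2) (fun i _ => sq_nonneg _) (Finset.mem_univ i)) hV
  rw [tendsto_zero_iff_norm_tendsto_zero]
  have h2 := h1.sqrt
  simpa using h2

/-- Smoothing of a slowly varying continuous signal. -/
lemma gt_smooth [CompleteSpace E] (g : ℝ → E) (hg : Continuous g)
    (hslow : ∀ ε > (0:ℝ), ∀ᶠ t in atTop, ∀ s ∈ Set.Icc t (t + 1), ‖g s - g t‖ ≤ ε) :
    ∃ G G' : ℝ → E, (∀ t, HasDerivAt G (G' t) t) ∧ Tendsto G' atTop (nhds 0) ∧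
      Tendsto (fun t => g t - G t) atTop (nhds 0) := by
  have hint : ∀ b c, IntervalIntegrable g volume b c := fun b c => hg.intervalIntegrable b c
  have hF : ∀ t, HasDerivAt (fun t => ∫ s in (0:ℝ)..t, g s) (g t) t := fun t =>
    intervalIntegral.integral_hasDerivAt_right (hint _ _)
      hg.stronglyMeasurable.stronglyMeasurableAtFilter hg.continuousAt
  refine ⟨fun t => (∫ s in (0:ℝ)..(t + 1), g s) - ∫ s in (0:ℝ)..t, g s,
    fun t => g (t + 1) - g t, fun t => ?_, ?_, ?_⟩
  · exact ((hF (t + 1)).comp_add_const t 1).sub (hF t)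
  · rw [Metric.tendsto_nhds]
    intro ε hε
    filter_upwards [hslow (ε / 2) (half_pos hε)] with t ht
    rw [dist_zero_right]
    have := ht (t + 1) ⟨by linarith, le_rfl⟩
    linarith
  · rw [Metric.tendsto_nhds]
    intro ε hε
    filter_upwards [hslow (ε / 2) (half_pos hε)] with t ht
    rw [dist_zero_right, intervalIntegral.integral_interval_sub_left (hint _ _) (hint _ _),
      norm_sub_rev]
    have h1 : (∫ s in t..(t + 1), g s) - g t = ∫ s in t..(t + 1), (g s - g t) := by
      rw [intervalIntegral.integral_sub (hint _ _) (by simp)]; simp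
    rw [h1]
    have h2 := intervalIntegral.norm_integral_le_of_norm_le_const (a := t) (b := t + 1)
      (f := fun s => g s - g t) (C := ε / 2) (fun s hs => by
        rw [Set.uIoc_of_le (by linarith)] at hs
        exact ht s ⟨hs.1.le, hs.2⟩)
    simp only [add_sub_cancel_left, abs_one, mul_one] at h2
    linarith
end

/-- Scalar maximum principle for the coupled system. -/
lemma gt_max {N : ℕ} (a : Fin N → Fin N → ℝ) (ha : ∀ i j, 0 ≤ a i j)
    (β : ℝ → ℝ) (hβ : ∀ t ≥ (0:ℝ), 0 < β t) (g s : Fin N → ℝ → ℝ)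
    (hs : ∀ i, ∀ t ≥ (0:ℝ), s i t ≤ 0)
    (hg : ∀ i, ∀ t ≥ (0:ℝ),
      HasDerivAt (g i) (∑ j, a i j * (g j t - g i t) + β t * (s i t - g i t)) t)
    (h0 : ∀ i, g i 0 ≤ 0) (i : Fin N) (t : ℝ) (ht : 0 ≤ t) : g i t ≤ 0 := by
  by_contra hcon
  push Not at hcon
  set ε := g i t with hε
  -- the set of times at which some coordinate reaches `ε`
  let S : Set ℝ := ⋃ j, (Set.Icc 0 t ∩ g j ⁻¹' (Set.Ici ε))
  have hScl : IsClosed S := by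
    refine isClosed_iUnion_of_finite fun j => ?_
    have : ContinuousOn (g j) (Set.Icc 0 t) := fun r hr =>
      (hg j r hr.1).continuousAt.continuousWithinAt
    exact this.preimage_isClosed_of_isClosed isClosed_Icc isClosed_Ici
  have hSne : S.Nonempty := ⟨t, Set.mem_iUnion.2 ⟨i, ⟨ht, le_rfl⟩, le_refl (g i t)⟩⟩
  have hSbd : BddBelow S := ⟨0, fun r hr => by
    obtain ⟨j, hj⟩ := Set.mem_iUnion.1 hr
    exact hj.1.1⟩
  obtain ⟨k, hk⟩ := Set.mem_iUnion.1 (hScl.csInf_mem hSne hSbd)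
  set T := sInf S with hT
  have hTk : ε ≤ g k T := hk.2
  have hT0 : 0 < T := by
    rcases hk.1.1.eq_or_lt with h | h
    · rw [← h] at hTk; linarith [h0 k]
    · exact h
  have hbefore : ∀ j, ∀ r, 0 ≤ r → r < T → g j r < ε := by
    intro j r hr hrT
    by_contra hge
    push Not at hge
    exact absurd (csInf_le hSbd (Set.mem_iUnion.2 ⟨j, ⟨hr, hrT.le.trans hk.1.2⟩, hge⟩))
      (not_le.2 hrT)
  have hev : ∀ᶠ r in nhdsWithin T (Set.Iio T), 0 ≤ r ∧ r < T := by
    filter_upwards [Ioo_mem_nhdsLT hT0] with r hr using ⟨hr.1.le, hr.2⟩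
  have hat : ∀ j, g j T ≤ ε := by
    intro j
    have h1 : Tendsto (g j) (nhdsWithin T (Set.Iio T)) (nhds (g j T)) :=
      (hg j T hT0.le).continuousAt.tendsto.mono_left nhdsWithin_le_nhds
    refine le_of_tendsto h1 ?_
    filter_upwards [hev] with r hr using (hbefore j r hr.1 hr.2).le
  have hkT : g k T = ε := le_antisymm (hat k) hTk
  have hder := hg k T hT0.le
  have hneg : ∑ j, a k j * (g j T - g k T) + β T * (s k T - g k T) < 0 := by
    have h1 : ∑ j, a k j * (g j T - g k T) ≤ 0 := Finset.sum_nonpos fun j _ =>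
      mul_nonpos_of_nonneg_of_nonpos (ha k j) (by linarith [hat j])
    have h2 : β T * (s k T - g k T) < 0 :=
      mul_neg_of_pos_of_neg (hβ T hT0.le) (by linarith [hs k T hT0.le])
    linarith
  have hslope := (hasDerivAt_iff_tendsto_slope.1 hder).mono_left
    (nhdsWithin_mono T (s := Set.Iio T) (fun r hr => ne_of_lt hr))
  have hge := ge_of_tendsto hslope (b := 0) (by
    filter_upwards [hev] with r hr
    rw [slope_def_field]
    exact div_nonneg_of_nonpos (by linarith [hbefore k r hr.1 hr.2]) (by linarith [hr.2]))
  linarith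

/-- Theorem 1(ii) (global gradient tracking): along the distributed
projection-free dynamics (Algorithm 1) with initial conditions `x i 0 ∈ Ω`
and `y i 0 = 0`, each auxiliary variable `z i` asymptotically tracks the
global gradient `(1/N) ∑ j, ∇f j (x j t)`. -/
theorem theorem1_ii_gradient_tracking
    (n N : ℕ) (hN : 0 < N)
    (a : Fin N → Fin N → ℝ)
    (ha_nonneg : ∀ i j, 0 ≤ a i j)
    (ha_conn : ∀ i j : Fin N, Relation.ReflTransGen (fun p q => 0 < a q p) i j)
    (ha_bal : ∀ i, ∑ j, a i j = ∑ j, a j i)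
    (Ω : Set (EuclideanSpace ℝ (Fin n)))
    (hΩconv : Convex ℝ Ω) (hΩcpt : IsCompact Ω) (hΩne : Ω.Nonempty)
    (f : Fin N → EuclideanSpace ℝ (Fin n) → ℝ) (κ : ℝ) (hκ : 0 < κ)
    (hfconv : ∀ i, ConvexOn ℝ Set.univ (f i))
    (hfdiff : ∀ i, Differentiable ℝ (f i))
    (hflip : ∀ i, ∀ p ∈ Ω, ∀ q ∈ Ω,
      ‖gradient (f i) p - gradient (f i) q‖ ≤ κ * ‖p - q‖)
    (β : ℝ → ℝ)
    (hβpos : ∀ t ≥ (0:ℝ), 0 < β t)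
    (hβ0 : Tendsto β atTop (nhds 0))
    (hβdiv : Tendsto (fun t => ∫ τ in (0:ℝ)..t, β τ) atTop atTop)
    (x y z v : Fin N → ℝ → EuclideanSpace ℝ (Fin n))
    (hx : ∀ i, ∀ t ≥ (0:ℝ), HasDerivAt (x i)
      (∑ j, a i j • (x j t - x i t) + β t • (v i t - x i t)) t)
    (hy : ∀ i, ∀ t ≥ (0:ℝ), HasDerivAt (y i) (∑ j, a i j • (z j t - z i t)) t)
    (hz : ∀ i, ∀ t ≥ (0:ℝ), z i t = y i t + gradient (f i) (x i t))
    (hv : ∀ i, ∀ t ≥ (0:ℝ), v i t ∈ Ω ∧ ∀ w ∈ Ω, ⟪z i t, v i t⟫ ≤ ⟪z i t, w⟫)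
    (hx0 : ∀ i, x i 0 ∈ Ω) (hy0 : ∀ i, y i 0 = 0) :
    ∀ i : Fin N, Tendsto
      (fun t => z i t - (N:ℝ)⁻¹ • ∑ j, gradient (f j) (x j t)) atTop (nhds 0) := by
  -- invariance of `Ω`
  have hinv : ∀ i, ∀ t ≥ (0:ℝ), x i t ∈ Ω := by
    intro i t ht
    by_contra hnot
    obtain ⟨ℓ, c, hℓ1, hℓ2⟩ := geometric_hahn_banach_closed_point hΩconv hΩcpt.isClosed hnot
    have := gt_max a ha_nonneg β hβpos (fun i t => ℓ (x i t) - c) (fun i t => ℓ (v i t) - c)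
      (fun i t ht => by linarith [hℓ1 _ (hv i t ht).1])
      (fun i t ht => by
        have h1 := (ℓ.hasFDerivAt.comp_hasDerivAt t (hx i t ht)).sub_const c
        refine HasDerivAt.congr_deriv h1 ?_
        simp [map_sum])
      (fun i => by linarith [hℓ1 _ (hx0 i)]) i t ht
    linarith
  obtain ⟨D, hD⟩ := hΩcpt.isBounded.exists_norm_le
  -- the forcing in the `x` dynamics vanishes
  have hforce : ∀ i, Tendsto (fun t => β t • (v i t - x i t)) atTop (nhds 0) := by
    intro i
    have h1 : Tendsto (fun t => |β t| * (D + D)) atTop (nhds 0) := by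
      simpa using hβ0.abs.mul_const (D + D)
    refine squeeze_zero_norm' ?_ h1
    filter_upwards [eventually_ge_atTop (0:ℝ)] with t ht
    rw [norm_smul, Real.norm_eq_abs]
    refine mul_le_mul_of_nonneg_left ?_ (abs_nonneg _)
    exact (norm_sub_le _ _).trans (add_le_add (hD _ (hv i t ht).1) (hD _ (hinv i t ht)))
  have hcons := gt_consensus hN a ha_nonneg ha_conn ha_bal x
    (fun i t => β t • (v i t - x i t)) hx hforce
  -- the velocity vanishes
  have hvel : ∀ i, Tendsto
      (fun t => ∑ j, a i j • (x j t - x i t) + β t • (v i t - x i t)) atTop (nhds 0) := by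
    intro i
    have h1 : Tendsto (fun t => ∑ j, a i j • (x j t - x i t)) atTop
        (nhds (∑ j, a i j • (0 : EuclideanSpace ℝ (Fin n)))) := by
      refine tendsto_finsetSum _ fun j _ => Tendsto.const_smul ?_ _
      simpa using (hcons j).sub (hcons i)
    simpa using h1.add (hforce i)
  -- extended gradient signals
  let g : Fin N → ℝ → EuclideanSpace ℝ (Fin n) := fun i t => gradient (f i) (x i (max t 0))
  have hgeq : ∀ i, ∀ t ≥ (0:ℝ), g i t = gradient (f i) (x i t) := by
    intro i t ht
    simp only [g, max_eq_left ht]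
  have hgc : ∀ i, Continuous (g i) := by
    intro i
    have h1 : ContinuousOn (gradient (f i)) Ω :=
      (LipschitzOnWith.of_dist_le_mul (K := κ.toNNReal) (fun p hp q hq => by
        rw [dist_eq_norm, dist_eq_norm, Real.coe_toNNReal _ hκ.le]
        exact hflip i p hp q hq)).continuousOn
    have h2 : Continuous (fun t => x i (max t 0)) := by
      rw [continuous_iff_continuousAt]
      intro t
      exact ContinuousAt.comp (f := fun t : ℝ => max t 0) (g := x i)
        (hx i (max t 0) (le_max_right _ _)).continuousAt (by fun_prop)
    exact h1.comp_continuous h2 fun t => hinv i _ (le_max_right _ _)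
  have hslow : ∀ i, ∀ ε > (0:ℝ), ∀ᶠ t in atTop, ∀ s ∈ Set.Icc t (t + 1),
      ‖g i s - g i t‖ ≤ ε := by
    intro i ε hε
    have h1 := (hvel i).norm
    rw [norm_zero] at h1
    have h2 := h1.eventually_le_const (div_pos hε hκ)
    obtain ⟨T, hT⟩ := (h2.and (eventually_ge_atTop (0:ℝ))).exists_forall_of_atTop
    filter_upwards [eventually_ge_atTop T] with t ht s hs
    have ht0 : 0 ≤ t := (hT t ht).2
    have hs0 : 0 ≤ s := ht0.trans hs.1
    rw [hgeq i s hs0, hgeq i t ht0]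
    refine (hflip i _ (hinv i s hs0) _ (hinv i t ht0)).trans ?_
    have h3 : ‖x i s - x i t‖ ≤ (ε / κ) * ‖s - t‖ :=
      (convex_Icc t (t + 1)).norm_image_sub_le_of_norm_hasDerivWithin_le
        (fun r hr => (hx i r (ht0.trans hr.1)).hasDerivWithinAt)
        (fun r hr => (hT r (ht.trans hr.1)).1) ⟨le_rfl, by linarith⟩ hs
    have h4 : ‖s - t‖ ≤ 1 := by
      rw [Real.norm_eq_abs, abs_le]; constructor <;> linarith [hs.1, hs.2]
    calc κ * ‖x i s - x i t‖ ≤ κ * ((ε / κ) * 1) := by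
          refine mul_le_mul_of_nonneg_left (h3.trans ?_) hκ.le
          exact mul_le_mul_of_nonneg_left h4 (by positivity)
      _ = ε := by field_simp
  choose G G' hG hG' hgG using fun i => gt_smooth (g i) (hgc i) (hslow i)
  -- tracking dynamics with smoothed gradients
  have htrack := gt_consensus hN a ha_nonneg ha_conn ha_bal (fun i t => y i t + G i t)
    (fun i t => ∑ j, a i j • ((g j t - G j t) - (g i t - G i t)) + G' i t)
    (fun i t ht => by
      have h1 := (hy i t ht).add (hG i t)
      refine HasDerivAt.congr_deriv h1 ?_
      symm
      rw [← add_assoc, ← Finset.sum_add_distrib]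
      congr 1
      refine Finset.sum_congr rfl fun j _ => ?_
      rw [hz j t ht, hz i t ht, ← hgeq j t ht, ← hgeq i t ht, ← smul_add]
      congr 1
      abel)
    (fun i => by
      have h1 : Tendsto (fun t => ∑ j, a i j • ((g j t - G j t) - (g i t - G i t))) atTop
          (nhds (∑ j, a i j • ((0 : EuclideanSpace ℝ (Fin n)) - 0))) :=
        tendsto_finsetSum _ fun j _ => ((hgG j).sub (hgG i)).const_smul _
      simpa using h1.add (hG' i))
  have hysum : ∀ t ≥ (0:ℝ), ∑ i, y i t = 0 := by
    intro t ht
    have h1 : ∀ r ∈ Set.Icc 0 t, HasDerivWithinAt (fun r => ∑ i, y i r) 0 (Set.Icc 0 t) r := by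
      intro r hr
      have h2 : HasDerivAt (fun r => ∑ i, y i r) (∑ i, ∑ j, a i j • (z j r - z i r)) r :=
        HasDerivAt.fun_sum fun i _ => hy i r hr.1
      rw [gt_bal_sum a ha_bal (fun i => z i r)] at h2
      exact h2.hasDerivWithinAt
    have h3 := (convex_Icc 0 t).norm_image_sub_le_of_norm_hasDerivWithin_le (C := 0) h1
      (fun r hr => by simp) ⟨le_rfl, ht⟩ ⟨ht, le_rfl⟩
    simpa [hy0] using h3
  intro i
  have hmean : Tendsto (fun t => (N:ℝ)⁻¹ • ∑ j, (g j t - G j t)) atTop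
      (nhds ((N:ℝ)⁻¹ • ∑ _j : Fin N, (0 : EuclideanSpace ℝ (Fin n)))) :=
    (tendsto_finsetSum _ fun j _ => hgG j).const_smul _
  have hfin := ((htrack i).add (hgG i)).sub hmean
  simp only [Finset.sum_const_zero, smul_zero, add_zero, sub_zero] at hfin
  refine hfin.congr' ?_
  filter_upwards [eventually_ge_atTop (0:ℝ)] with t ht
  have e1 : ∑ j, gradient (f j) (x j t) = ∑ j, g j t :=
    Finset.sum_congr rfl fun j _ => (hgeq j t ht).symm
  rw [hz i t ht, e1, ← hgeq i t ht, Finset.sum_add_distrib, hysum t ht, zero_add,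
    Finset.sum_sub_distrib, smul_sub]
  abel
end

section
/- (Differential inequality (5) for the averaged objective) Along the distributed projection-free dynamics with x_i(t) ∈ Ω for all t, let x̄(t) = (1/N)∑_{i=1}^N x_i(t), let x* be an optimal solution of min_{x∈Ω} F(x) with F = (1/N)∑_i f_i, let V(t) = F(x̄(t)) − F(x*), let W(t) = z(t) − (1/N)1̂1̂ᵀ G(x(t)) be the stacked gradient-tracking error (where z = col{z_1,…,z_N}, G(x) = col{∇f_1(x_1),…,∇f_N(x_N)}, 1̂ = 1_N ⊗ I_n), and let c > 0 be a constant with ‖v(t) − x̄*‖ ≤ c for the stacked vectors v(t) = col{v_1(t),…,v_N(t)} and x̄* = col{x*,…,x*} (such c exists since Ω is compact). Then for all t ≥ 0, V̇(t) ≤ −β(t)V(t) + (cβ(t)/N)(‖W(t)‖ + κ‖x̄(t)·1 − x(t)‖), where x̄(t)·1 = col{x̄(t),…,x̄(t)} and x(t) = col{x_1(t),…,x_N(t)}. -/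
open Filter MeasureTheory
open scoped RealInnerProductSpace

theorem aux_convex_grad {n : ℕ} (f : EuclideanSpace ℝ (Fin n) → ℝ)
    (hc : ConvexOn ℝ Set.univ f) (hd : Differentiable ℝ f) (p q : EuclideanSpace ℝ (Fin n)) :
    ⟪gradient f p, q - p⟫ ≤ f q - f p := by
  have h1 : ConvexOn ℝ Set.univ (fun s : ℝ => f (AffineMap.lineMap p q s)) := by
    have := hc.comp_affineMap (AffineMap.lineMap (k := ℝ) p q)
    simpa [Function.comp_def] using this
  have h2 : HasDerivAt (fun s : ℝ => f (AffineMap.lineMap p q s)) ⟪gradient f p, q - p⟫ 0 := by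
    have hg : HasFDerivAt f (innerSL ℝ (gradient f p)) (AffineMap.lineMap p q (0:ℝ)) := by
      rw [AffineMap.lineMap_apply_zero]
      exact (hd p).hasGradientAt.hasFDerivAt
    have hl : HasDerivAt (fun s : ℝ => AffineMap.lineMap p q s) (q - p) (0:ℝ) :=
      AffineMap.hasDerivAt_lineMap
    exact hg.comp_hasDerivAt (0:ℝ) hl
  have h3 := h1.le_slope_of_hasDerivAt (Set.mem_univ 0) (Set.mem_univ 1) one_pos h2
  simpa [slope] using h3

theorem aux_cs {n N : ℕ} (u w : Fin N → EuclideanSpace ℝ (Fin n)) :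
    ∑ i, ⟪u i, w i⟫ ≤ Real.sqrt (∑ i, ‖u i‖^2) * Real.sqrt (∑ i, ‖w i‖^2) :=
  (Finset.sum_le_sum fun i _ => real_inner_le_norm (u i) (w i)).trans
    (Real.sum_mul_le_sqrt_mul_sqrt _ _ _)

theorem aux_bal {n N : ℕ} (a : Fin N → Fin N → ℝ)
    (ha_bal : ∀ i, ∑ j, a i j = ∑ j, a j i) (x : Fin N → EuclideanSpace ℝ (Fin n)) :
    ∑ i, ∑ j, a i j • (x j - x i) = 0 := by
  simp only [smul_sub, Finset.sum_sub_distrib]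
  rw [Finset.sum_comm, sub_eq_zero]
  refine Finset.sum_congr rfl fun i _ => ?_
  rw [← Finset.sum_smul, ← Finset.sum_smul, ha_bal]

theorem aux_avg_mem {n N : ℕ} (hN : 0 < N) {Ω : Set (EuclideanSpace ℝ (Fin n))}
    (hΩ : Convex ℝ Ω) (x : Fin N → EuclideanSpace ℝ (Fin n)) (hx : ∀ i, x i ∈ Ω) :
    (N:ℝ)⁻¹ • ∑ k, x k ∈ Ω := by
  have hN' : (N:ℝ) ≠ 0 := by positivity
  rw [Finset.smul_sum]
  refine hΩ.sum_mem (fun i _ => by positivity) ?_ (fun i _ => hx i)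
  simp [hN']

theorem aux_lip {n N : ℕ} (hN : 0 < N) (κ : ℝ) (hκ : 0 < κ)
    (g h d : Fin N → EuclideanSpace ℝ (Fin n)) (hgh : ∀ i, ‖g i - h i‖ ≤ κ * ‖d i‖) :
    Real.sqrt (∑ _i : Fin N, ‖(N:ℝ)⁻¹ • ∑ j, g j - (N:ℝ)⁻¹ • ∑ j, h j‖^2)
      ≤ κ * Real.sqrt (∑ i, ‖d i‖^2) := by
  have hN' : (0:ℝ) < N := by exact_mod_cast hN
  have h1 : ‖(N:ℝ)⁻¹ • ∑ j, g j - (N:ℝ)⁻¹ • ∑ j, h j‖ ≤ (N:ℝ)⁻¹ * (κ * ∑ j, ‖d j‖) := by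
    rw [← smul_sub, norm_smul, ← Finset.sum_sub_distrib, Finset.mul_sum, Real.norm_of_nonneg (by positivity)]
    gcongr
    exact (norm_sum_le _ _).trans (Finset.sum_le_sum fun i _ => hgh i)
  have h2 : (∑ j, ‖d j‖)^2 ≤ N * ∑ j, ‖d j‖^2 := by
    simpa using sq_sum_le_card_mul_sum_sq (s := Finset.univ) (f := fun j => ‖d j‖)
  refine Real.sqrt_le_iff.mpr ⟨by positivity, ?_⟩
  rw [mul_pow, Real.sq_sqrt (by positivity), Finset.sum_const, Finset.card_univ, Fintype.card_fin, nsmul_eq_mul]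
  calc (N:ℝ) * ‖(N:ℝ)⁻¹ • ∑ j, g j - (N:ℝ)⁻¹ • ∑ j, h j‖^2
      ≤ N * ((N:ℝ)⁻¹ * (κ * ∑ j, ‖d j‖))^2 := by gcongr
    _ = (N:ℝ)⁻¹ * κ^2 * (∑ j, ‖d j‖)^2 := by field_simp
    _ ≤ (N:ℝ)⁻¹ * κ^2 * (N * ∑ j, ‖d j‖^2) := by gcongr
    _ = κ^2 * ∑ j, ‖d j‖^2 := by field_simp

/-- Differential inequality (5) for the averaged objective: along the
distributed projection-free dynamics with `x i t ∈ Ω` for all `t ≥ 0`, letting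
`x̄ t = (1/N) ∑ i, x i t`, `x*` an optimal solution of `min_{x ∈ Ω} F x` with
`F = (1/N) ∑ i, f i`, `V t = F (x̄ t) - F x*`, `W t` the stacked
gradient-tracking error (component `i`: `z i t - (1/N) ∑ j, ∇f j (x j t)`),
and `c > 0` a bound on the stacked norm `‖v t - x̄*‖`, one has
`V̇ t ≤ -β t * V t + (c β t / N)(‖W t‖ + κ ‖x̄ t · 1 - x t‖)`. -/
theorem averaged_objective_differential_inequality
    (n N : ℕ) (hN : 0 < N)
    (a : Fin N → Fin N → ℝ)
    (ha_nonneg : ∀ i j, 0 ≤ a i j)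
    (ha_conn : ∀ i j : Fin N, Relation.ReflTransGen (fun p q => 0 < a q p) i j)
    (ha_bal : ∀ i, ∑ j, a i j = ∑ j, a j i)
    (Ω : Set (EuclideanSpace ℝ (Fin n)))
    (hΩconv : Convex ℝ Ω) (hΩcpt : IsCompact Ω) (hΩne : Ω.Nonempty)
    (f : Fin N → EuclideanSpace ℝ (Fin n) → ℝ) (κ : ℝ) (hκ : 0 < κ)
    (hfconv : ∀ i, ConvexOn ℝ Set.univ (f i))
    (hfdiff : ∀ i, Differentiable ℝ (f i))
    (hflip : ∀ i, ∀ p ∈ Ω, ∀ q ∈ Ω,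
      ‖gradient (f i) p - gradient (f i) q‖ ≤ κ * ‖p - q‖)
    (β : ℝ → ℝ)
    (hβpos : ∀ t ≥ (0:ℝ), 0 < β t)
    (x y z v : Fin N → ℝ → EuclideanSpace ℝ (Fin n))
    (hx : ∀ i, ∀ t ≥ (0:ℝ), HasDerivAt (x i)
      (∑ j, a i j • (x j t - x i t) + β t • (v i t - x i t)) t)
    (hy : ∀ i, ∀ t ≥ (0:ℝ), HasDerivAt (y i) (∑ j, a i j • (z j t - z i t)) t)
    (hz : ∀ i, ∀ t ≥ (0:ℝ), z i t = y i t + gradient (f i) (x i t))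
    (hv : ∀ i, ∀ t ≥ (0:ℝ), v i t ∈ Ω ∧ ∀ w ∈ Ω, ⟪z i t, v i t⟫ ≤ ⟪z i t, w⟫)
    (hx0 : ∀ i, x i 0 ∈ Ω) (hy0 : ∀ i, y i 0 = 0)
    (hxΩ : ∀ i, ∀ t ≥ (0:ℝ), x i t ∈ Ω)
    (xstar : EuclideanSpace ℝ (Fin n))
    (hxstar : xstar ∈ Ω ∧ ∀ w ∈ Ω, (N:ℝ)⁻¹ * ∑ i, f i xstar ≤ (N:ℝ)⁻¹ * ∑ i, f i w)
    (c : ℝ) (hc : 0 < c)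
    (hcbound : ∀ t ≥ (0:ℝ), Real.sqrt (∑ i, ‖v i t - xstar‖^2) ≤ c) :
    ∀ t ≥ (0:ℝ), ∃ d : ℝ,
      HasDerivAt (fun τ =>
        (N:ℝ)⁻¹ * ∑ i, f i ((N:ℝ)⁻¹ • ∑ k, x k τ) - (N:ℝ)⁻¹ * ∑ i, f i xstar) d t ∧
      d ≤ -β t * ((N:ℝ)⁻¹ * ∑ i, f i ((N:ℝ)⁻¹ • ∑ k, x k t)
            - (N:ℝ)⁻¹ * ∑ i, f i xstar)
          + c * β t / N *
            (Real.sqrt (∑ i, ‖z i t - (N:ℝ)⁻¹ • ∑ j, gradient (f j) (x j t)‖^2)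
              + κ * Real.sqrt (∑ i, ‖(N:ℝ)⁻¹ • ∑ k, x k t - x i t‖^2)) := by
  intro t ht
  have hN' : (0:ℝ) < N := by exact_mod_cast hN
  have hβ := hβpos t ht
  set xb : EuclideanSpace ℝ (Fin n) := (N:ℝ)⁻¹ • ∑ k, x k t with hxb
  set gF : EuclideanSpace ℝ (Fin n) := (N:ℝ)⁻¹ • ∑ j, gradient (f j) xb with hgF
  set g : EuclideanSpace ℝ (Fin n) := (N:ℝ)⁻¹ • ∑ j, gradient (f j) (x j t) with hg
  have hxbΩ : xb ∈ Ω := aux_avg_mem hN hΩconv (fun k => x k t) (fun i => hxΩ i t ht)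
  have hsum : ∑ i, (v i t - x i t) = ∑ i, (v i t - xb) := by
    rw [Finset.sum_sub_distrib, Finset.sum_sub_distrib, Finset.sum_const, Finset.card_univ,
      Fintype.card_fin, hxb, ← Nat.cast_smul_eq_nsmul ℝ, smul_inv_smul₀ hN'.ne']
  have hder : HasDerivAt (fun τ => (N:ℝ)⁻¹ • ∑ k, x k τ)
      ((N:ℝ)⁻¹ • (β t • ∑ i, (v i t - xb))) t := by
    have h1 := (HasDerivAt.fun_sum (u := Finset.univ)
      (fun i _ => hx i t ht)).const_smul ((N:ℝ)⁻¹)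
    rw [Finset.sum_add_distrib, aux_bal a ha_bal (fun i => x i t), zero_add,
      ← Finset.smul_sum, hsum] at h1
    exact h1
  have hfi : ∀ i, HasDerivAt (fun τ => f i ((N:ℝ)⁻¹ • ∑ k, x k τ))
      ⟪gradient (f i) xb, (N:ℝ)⁻¹ • (β t • ∑ i, (v i t - xb))⟫ t := by
    intro i
    have hgr : HasFDerivAt (f i) (innerSL ℝ (gradient (f i) xb)) ((N:ℝ)⁻¹ • ∑ k, x k t) :=
      (hfdiff i xb).hasGradientAt.hasFDerivAt
    exact hgr.comp_hasDerivAt t hder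
  refine ⟨_, ((HasDerivAt.fun_sum (u := Finset.univ)
    (fun i _ => hfi i)).const_mul ((N:ℝ)⁻¹)).sub_const _, ?_⟩
  have hd : (N:ℝ)⁻¹ * ∑ i, ⟪gradient (f i) xb, (N:ℝ)⁻¹ • (β t • ∑ i, (v i t - xb))⟫
      = β t * (N:ℝ)⁻¹ * ∑ i, ⟪gF, v i t - xb⟫ := by
    rw [← sum_inner, ← inner_sum, hgF, real_inner_smul_left, real_inner_smul_right,
      real_inner_smul_right]
    ring
  have hsplit : ∑ i, ⟪gF, v i t - xb⟫ = N * ⟪gF, xstar - xb⟫ + ∑ i, ⟪gF - g, v i t - xstar⟫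
      + ∑ i, ⟪g - z i t, v i t - xstar⟫ + ∑ i, ⟪z i t, v i t - xstar⟫ := by
    have : (N:ℝ) * ⟪gF, xstar - xb⟫ = ∑ _i : Fin N, ⟪gF, xstar - xb⟫ := by simp
    rw [this, ← Finset.sum_add_distrib, ← Finset.sum_add_distrib, ← Finset.sum_add_distrib]
    refine Finset.sum_congr rfl fun i _ => ?_
    simp only [inner_sub_left, inner_sub_right]
    ring
  have hconv : ⟪gF, xstar - xb⟫ ≤ -((N:ℝ)⁻¹ * ∑ i, f i xb - (N:ℝ)⁻¹ * ∑ i, f i xstar) := by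
    rw [hgF, real_inner_smul_left, sum_inner, neg_sub, ← mul_sub, ← Finset.sum_sub_distrib]
    gcongr with i
    exact aux_convex_grad (f i) (hfconv i) (hfdiff i) xb xstar
  have hz0 : ∑ i, ⟪z i t, v i t - xstar⟫ ≤ 0 := by
    refine Finset.sum_nonpos fun i _ => ?_
    rw [inner_sub_right]
    exact sub_nonpos.mpr ((hv i t ht).2 xstar hxstar.1)
  have hW : ∑ i, ⟪g - z i t, v i t - xstar⟫ ≤ Real.sqrt (∑ i, ‖z i t - g‖^2) * c := by
    refine (aux_cs _ _).trans ?_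
    simp only [norm_sub_rev g]
    exact mul_le_mul_of_nonneg_left (hcbound t ht) (Real.sqrt_nonneg _)
  have hE : ∑ i, ⟪gF - g, v i t - xstar⟫ ≤ κ * Real.sqrt (∑ i, ‖xb - x i t‖^2) * c := by
    refine (aux_cs (fun _ => gF - g) _).trans ?_
    exact mul_le_mul (aux_lip hN κ hκ _ _ (fun i => xb - x i t)
      (fun i => hflip i _ hxbΩ _ (hxΩ i t ht))) (hcbound t ht) (Real.sqrt_nonneg _) (by positivity)
  rw [hd, hsplit]
  set S1 := Real.sqrt (∑ i, ‖z i t - g‖^2)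
  set S2 := Real.sqrt (∑ i, ‖xb - x i t‖^2)
  set V := (N:ℝ)⁻¹ * ∑ i, f i xb - (N:ℝ)⁻¹ * ∑ i, f i xstar
  have hNc : (N:ℝ) * ⟪gF, xstar - xb⟫ ≤ N * (-V) := mul_le_mul_of_nonneg_left hconv hN'.le
  calc _ ≤ β t * (N:ℝ)⁻¹ * (N * (-V) + κ * S2 * c + S1 * c + 0) := by
        apply mul_le_mul_of_nonneg_left _ (by positivity)
        linarith
    _ = _ := by field_simp; ring
end

section
/- (Objective value convergence of the average) Along the distributed projection-free dynamics with initial conditions x_i(0) ∈ Ω and y_i(0) = 0, the averaged objective value converges to the optimal value: with x̄(t) = (1/N)∑_{i=1}^N x_i(t) and F(x) = (1/N)∑_{i=1}^N f_i(x), one has F(x̄(t)) → min_{x∈Ω} F(x) as t → ∞. -/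
open Filter MeasureTheory
open scoped RealInnerProductSpace

theorem aux_barrier {ι : Type*} [Finite ι] (g g' : ι → ℝ → ℝ) (B T : ℝ)
    (hg : ∀ i, ∀ t ≥ T, HasDerivAt (g i) (g' i t) t)
    (h0 : ∀ i, g i T ≤ B)
    (hb : ∀ i, ∀ t ≥ T, (∀ j, g j t ≤ B) → g i t = B → g' i t < 0) :
    ∀ t ≥ T, ∀ i, g i t ≤ B := by
  intro t ht
  have key : Set.Icc T t ⊆ {s | ∀ i, g i s ≤ B} := by
    apply IsClosed.Icc_subset_of_forall_exists_gt
    · have : {s | ∀ i, g i s ≤ B} ∩ Set.Icc T t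
          = Set.Icc T t ∩ ⋂ i, (Set.Icc T t ∩ (g i) ⁻¹' Set.Iic B) := by
        ext s
        simp only [Set.mem_inter_iff, Set.mem_ofPred_eq, Set.mem_iInter, Set.mem_preimage,
          Set.mem_Iic]
        constructor
        · rintro ⟨h1, h2⟩
          exact ⟨h2, fun i => ⟨h2, h1 i⟩⟩
        · rintro ⟨h1, h2⟩
          exact ⟨fun i => (h2 i).2, h1⟩
      rw [this]
      refine isClosed_Icc.inter (isClosed_iInter fun i => ?_)
      apply ContinuousOn.preimage_isClosed_of_isClosed _ isClosed_Icc isClosed_Iic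
      exact fun s hs => (hg i s hs.1).continuousAt.continuousWithinAt
    · exact h0
    · rintro s ⟨hs, hsT, hst⟩ r hr
      have hev : ∀ᶠ q in nhdsWithin s (Set.Ioi s), ∀ i, g i q ≤ B := by
        rw [eventually_all]
        intro i
        rcases lt_or_eq_of_le (hs i) with hlt | heq
        · have := (hg i s hsT).continuousAt.eventually (gt_mem_nhds hlt)
          exact (this.filter_mono nhdsWithin_le_nhds).mono fun q hq => le_of_lt hq
        · have hneg := hb i s hsT hs heq
          have := ((hg i s hsT).hasDerivWithinAt (s := Set.Ioi s)).limsup_slope_le hneg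
          have h2 : Set.Ioi s \ {s} = Set.Ioi s := by
            ext q; simp
          rw [h2] at this
          filter_upwards [this, self_mem_nhdsWithin] with q hq hqs
          rw [slope_def_field, div_neg_iff] at hq
          have : s < q := hqs
          rcases hq with hq | hq
          · linarith [hq.2]
          · linarith [hq.1]
      have h3 : ∀ᶠ q in nhdsWithin s (Set.Ioi s), q ∈ Set.Ioc s r := Ioc_mem_nhdsGT hr
      obtain ⟨q, hq1, hq2⟩ := (hev.and h3).exists
      exact ⟨q, hq1, hq2⟩
  exact key ⟨ht, le_rfl⟩

theorem aux_compare (V V' β : ℝ → ℝ)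
    (hV : ∀ t ≥ (0:ℝ), HasDerivAt V (V' t) t)
    (hβpos : ∀ t ≥ (0:ℝ), 0 < β t)
    (hβdiv : Tendsto (fun t => ∫ τ in (0:ℝ)..t, β τ) atTop atTop)
    (hV0 : ∀ t ≥ (0:ℝ), 0 ≤ V t)
    (hd : ∀ ε > 0, ∀ᶠ t in atTop, V' t ≤ - β t * (V t - ε)) :
    Tendsto V atTop (nhds 0) := by
  have hint : ∀ t ≥ (0:ℝ), IntervalIntegrable β volume 0 t := by
    intro t ht
    obtain ⟨s, hs1, hs2⟩ := ((hβdiv.eventually_gt_atTop 0).and (eventually_ge_atTop t)).exists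
    have h1 : IntervalIntegrable β volume 0 s := by
      by_contra h
      rw [intervalIntegral.integral_undef h] at hs1
      exact lt_irrefl _ hs1
    apply h1.mono_set
    rw [Set.uIcc_of_le ht, Set.uIcc_of_le (ht.trans hs2)]
    exact Set.Icc_subset_Icc le_rfl hs2
  have key : ∀ ε > 0, ∀ᶠ t in atTop, V t ≤ 2 * ε := by
    intro ε hε
    obtain ⟨T, hT⟩ := eventually_atTop.1 ((hd ε hε).and (eventually_ge_atTop 0))
    have hT0 : 0 ≤ T := (hT T le_rfl).2
    have ex : ∃ t ≥ T, V t ≤ 2 * ε := by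
      by_contra hcon
      push Not at hcon
      have hle : ∀ t ≥ T, ε * ∫ τ in T..t, β τ ≤ V T := by
        intro t ht
        have hi : IntervalIntegrable β volume T t :=
          (hint T hT0).symm.trans (hint t (hT0.trans ht))
        have := intervalIntegral.sub_le_integral_of_hasDeriv_right_of_le (g := V) (g' := V')
          (φ := fun τ => - ε * β τ) ht
          (fun s hs => (hV s (hT0.trans hs.1)).continuousAt.continuousWithinAt)
          (fun s hs => (hV s (hT0.trans hs.1.le)).hasDerivWithinAt)
          ((intervalIntegrable_iff_integrableOn_Icc_of_le ht).1 (hi.const_mul _))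
          (fun s hs => by
            have h1 := (hT s hs.1.le).1
            have h2 := hcon s hs.1.le
            have h3 := hβpos s (hT0.trans hs.1.le)
            nlinarith)
        rw [intervalIntegral.integral_const_mul] at this
        have := hV0 t (hT0.trans ht)
        linarith
      obtain ⟨t, ht1, ht2⟩ := ((hβdiv.eventually_gt_atTop
        ((∫ τ in (0:ℝ)..T, β τ) + V T / ε)).and (eventually_ge_atTop T)).exists
      have h1 := hle t ht2
      have h2 := intervalIntegral.integral_add_adjacent_intervals (hint T hT0)
        ((hint T hT0).symm.trans (hint t (hT0.trans ht2)))
      have h3 : V T / ε < ∫ τ in T..t, β τ := by linarith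
      rw [div_lt_iff₀ hε] at h3
      linarith
    obtain ⟨t₁, ht₁, hVt⟩ := ex
    have := aux_barrier (ι := Unit) (fun _ => V) (fun _ => V') (2 * ε) t₁
      (fun _ t ht => hV t (hT0.trans (ht₁.trans ht))) (fun _ => hVt)
      (fun _ t ht _ h => by
        have h1 := (hT t (ht₁.trans ht)).1
        have h3 := hβpos t (hT0.trans (ht₁.trans ht))
        have h' : V t = 2 * ε := h
        rw [h'] at h1
        nlinarith)
    exact eventually_atTop.2 ⟨t₁, fun t ht => this t ht ()⟩
  rw [Metric.tendsto_nhds]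
  intro ε hε
  filter_upwards [key (ε / 4) (by linarith), eventually_ge_atTop 0] with t h1 h2
  rw [Real.dist_eq, sub_zero, abs_of_nonneg (hV0 t h2)]
  linarith

theorem aux_grad_ineq {E : Type*} [NormedAddCommGroup E] [InnerProductSpace ℝ E]
    [CompleteSpace E] (f : E → ℝ) (hc : ConvexOn ℝ Set.univ f) (hd : Differentiable ℝ f)
    (p q : E) : ⟪gradient f p, q - p⟫ ≤ f q - f p := by
  have hg := (hd p).hasGradientAt.hasFDerivAt
  have h1 : ConvexOn ℝ Set.univ (fun s : ℝ => f (AffineMap.lineMap p q s)) := by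
    have := hc.comp_affineMap (AffineMap.lineMap p q : ℝ →ᵃ[ℝ] E)
    exact this
  have h2 : HasDerivAt (fun s : ℝ => f (AffineMap.lineMap p q s)) ⟪gradient f p, q - p⟫ 0 := by
    have hl : HasDerivAt (fun s : ℝ => (AffineMap.lineMap p q s : E)) (q - p) 0 :=
      AffineMap.hasDerivAt_lineMap
    have hg' : HasFDerivAt f (InnerProductSpace.toDual ℝ E (gradient f p))
      (AffineMap.lineMap p q (0:ℝ)) := by simpa using hg
    exact hg'.comp_hasDerivAt (0:ℝ) hl
  have h3 := h1.le_slope_of_hasDerivAt (Set.mem_univ 0) (Set.mem_univ 1) one_pos h2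
  simpa [slope_def_field] using h3

/-- quadratic form controls pairwise differences -/
theorem aux_conn {N : ℕ} {E : Type*} [NormedAddCommGroup E]
    (a : Fin N → Fin N → ℝ) (ha : ∀ i j, 0 ≤ a i j)
    (hc : ∀ i j : Fin N, Relation.ReflTransGen (fun p q => 0 < a q p) i j) :
    ∃ C > 0, ∀ u : Fin N → E, ∀ i j,
      ‖u i - u j‖ ^ 2 ≤ C * ∑ k, ∑ l, a k l * ‖u l - u k‖ ^ 2 := by
  have hQ : ∀ u : Fin N → E, 0 ≤ ∑ k, ∑ l, a k l * ‖u l - u k‖ ^ 2 := fun u =>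
    Finset.sum_nonneg fun k _ => Finset.sum_nonneg fun l _ => mul_nonneg (ha k l) (sq_nonneg _)
  have h1 : ∀ i j, ∃ C ≥ 0, ∀ u : Fin N → E,
      ‖u i - u j‖ ^ 2 ≤ C * ∑ k, ∑ l, a k l * ‖u l - u k‖ ^ 2 := by
    intro i j
    induction hc i j with
    | refl => exact ⟨0, le_rfl, fun u => by simp⟩
    | @tail b c _ hbc ih =>
      obtain ⟨C, hC, h⟩ := ih
      refine ⟨2 * C + 2 / a c b, by positivity, fun u => ?_⟩
      have e1 : a c b * ‖u b - u c‖ ^ 2 ≤ ∑ k, ∑ l, a k l * ‖u l - u k‖ ^ 2 := by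
        refine le_trans ?_ (Finset.single_le_sum (f := fun k => ∑ l, a k l * ‖u l - u k‖ ^ 2)
          (fun k _ => Finset.sum_nonneg fun l _ => mul_nonneg (ha k l) (sq_nonneg _))
          (Finset.mem_univ c))
        exact Finset.single_le_sum (f := fun l => a c l * ‖u l - u c‖ ^ 2)
          (fun l _ => mul_nonneg (ha c l) (sq_nonneg _)) (Finset.mem_univ b)
      have e2 : ‖u b - u c‖ ^ 2 ≤ 1 / a c b * ∑ k, ∑ l, a k l * ‖u l - u k‖ ^ 2 := by
        rw [div_mul_eq_mul_div, one_mul, le_div_iff₀ hbc]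
        linarith
      have e3 : ‖u i - u c‖ ≤ ‖u i - u b‖ + ‖u b - u c‖ := norm_sub_le_norm_sub_add_norm_sub _ _ _
      have e4 : ‖u i - u c‖ ^ 2 ≤ 2 * ‖u i - u b‖ ^ 2 + 2 * ‖u b - u c‖ ^ 2 := by
        nlinarith [norm_nonneg (u i - u c), sq_nonneg (‖u i - u b‖ - ‖u b - u c‖)]
      have e5 := h u
      calc _ ≤ _ := e4
        _ ≤ 2 * (C * ∑ k, ∑ l, a k l * ‖u l - u k‖ ^ 2)
          + 2 * (1 / a c b * ∑ k, ∑ l, a k l * ‖u l - u k‖ ^ 2) := by gcongr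
        _ = _ := by ring
  choose C hC h using h1
  refine ⟨1 + ∑ i, ∑ j, C i j, ?_, fun u i j => ?_⟩
  · have : 0 ≤ ∑ i, ∑ j, C i j :=
      Finset.sum_nonneg fun k _ => Finset.sum_nonneg fun l _ => hC k l
    linarith
  · refine (h i j u).trans (mul_le_mul_of_nonneg_right ?_ (hQ u))
    have h2 : C i j ≤ ∑ l, C i l :=
      Finset.single_le_sum (f := fun l => C i l) (fun l _ => hC i l) (Finset.mem_univ j)
    have h3 : ∑ l, C i l ≤ ∑ k, ∑ l, C k l :=
      Finset.single_le_sum (f := fun k => ∑ l, C k l)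
        (fun k _ => Finset.sum_nonneg fun l _ => hC k l) (Finset.mem_univ i)
    linarith

theorem aux_lap_sum {N : ℕ} {E : Type*} [AddCommGroup E] [Module ℝ E]
    (a : Fin N → Fin N → ℝ) (hb : ∀ i, ∑ j, a i j = ∑ j, a j i) (u : Fin N → E) :
    ∑ i, ∑ j, a i j • (u j - u i) = 0 := by
  simp only [smul_sub, Finset.sum_sub_distrib]
  rw [Finset.sum_comm]
  simp only [← Finset.sum_smul, hb, sub_self]

theorem aux_dissip {N : ℕ} {E : Type*} [NormedAddCommGroup E] [InnerProductSpace ℝ E]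
    (a : Fin N → Fin N → ℝ) (hb : ∀ i, ∑ j, a i j = ∑ j, a j i) (u : Fin N → E) (m : E) :
    ∑ i, 2 * ⟪u i - m, ∑ j, a i j • (u j - u i)⟫ = - ∑ k, ∑ l, a k l * ‖u l - u k‖ ^ 2 := by
  have h0 := aux_lap_sum a hb (fun i => ‖u i - m‖ ^ 2)
  have h1 : ∀ i j, 2 * (a i j * ⟪u i - m, u j - u i⟫) =
      a i j • (‖u j - m‖ ^ 2 - ‖u i - m‖ ^ 2) - a i j * ‖u j - u i‖ ^ 2 := by
    intro i j
    have : u j - m = (u i - m) + (u j - u i) := by abel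
    rw [this, norm_add_sq_real, smul_eq_mul]
    ring
  have h2 : ∀ i, 2 * ⟪u i - m, ∑ j, a i j • (u j - u i)⟫ =
      ∑ j, a i j • (‖u j - m‖ ^ 2 - ‖u i - m‖ ^ 2) - ∑ j, a i j * ‖u j - u i‖ ^ 2 := by
    intro i
    rw [inner_sum, Finset.mul_sum, ← Finset.sum_sub_distrib]
    refine Finset.sum_congr rfl fun j _ => ?_
    rw [inner_smul_right, h1]
  simp only [h2, Finset.sum_sub_distrib]
  simp only [smul_sub, Finset.sum_sub_distrib] at h0 ⊢
  rw [h0]; ring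

theorem aux_consensus {N : ℕ} (hN : 0 < N) {E : Type*} [NormedAddCommGroup E]
    [InnerProductSpace ℝ E]
    (a : Fin N → Fin N → ℝ) (ha : ∀ i j, 0 ≤ a i j)
    (hc : ∀ i j : Fin N, Relation.ReflTransGen (fun p q => 0 < a q p) i j)
    (hb : ∀ i, ∑ j, a i j = ∑ j, a j i)
    (u p : Fin N → ℝ → E)
    (hu : ∀ i, ∀ t ≥ (0:ℝ), HasDerivAt (u i) (∑ j, a i j • (u j t - u i t) + p i t) t)
    (hp : ∀ i, Tendsto (p i) atTop (nhds 0)) :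
    ∀ i, Tendsto (fun t => u i t - (N:ℝ)⁻¹ • ∑ k, u k t) atTop (nhds 0) := by
  have hN' : (0:ℝ) < N := by exact_mod_cast hN
  obtain ⟨C, hC, hQ⟩ := aux_conn (E := E) a ha hc
  set m : ℝ → E := fun t => (N:ℝ)⁻¹ • ∑ k, u k t with hm
  set u' : Fin N → ℝ → E := fun i t => ∑ j, a i j • (u j t - u i t) + p i t with hu'
  set m' : ℝ → E := fun t => (N:ℝ)⁻¹ • ∑ k, u' k t with hm'
  have hmd : ∀ t ≥ (0:ℝ), HasDerivAt m (m' t) t := fun t ht =>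
    (HasDerivAt.fun_sum fun i _ => hu i t ht).const_smul _
  have hsum : ∀ t, ∑ i, (u i t - m t) = 0 := by
    intro t
    simp only [Finset.sum_sub_distrib, Finset.sum_const, Finset.card_univ, Fintype.card_fin, hm]
    rw [← Nat.cast_smul_eq_nsmul ℝ, smul_smul, mul_inv_cancel₀ hN'.ne', one_smul, sub_self]
  have he : ∀ t i, ‖u i t - m t‖ ^ 2 ≤ C * ∑ k, ∑ l, a k l * ‖u l t - u k t‖ ^ 2 := by
    intro t i
    have h1 : u i t - m t = ∑ k, (N:ℝ)⁻¹ • (u i t - u k t) := by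
      simp only [smul_sub, Finset.sum_sub_distrib, Finset.sum_const, Finset.card_univ,
        Fintype.card_fin, hm, ← Finset.smul_sum]
      rw [← Nat.cast_smul_eq_nsmul ℝ, smul_smul, mul_inv_cancel₀ hN'.ne', one_smul]
    have h2 : ‖u i t - m t‖ ≤ √(C * ∑ k, ∑ l, a k l * ‖u l t - u k t‖ ^ 2) := by
      rw [h1]
      calc _ ≤ ∑ k : Fin N, (N:ℝ)⁻¹ * √(C * ∑ k, ∑ l, a k l * ‖u l t - u k t‖ ^ 2) := by
            refine norm_sum_le_of_le _ fun k _ => ?_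
            rw [norm_smul, Real.norm_of_nonneg (inv_nonneg.2 hN'.le)]
            gcongr
            exact Real.le_sqrt_of_sq_le (hQ (fun i => u i t) i k)
        _ = _ := by
            simp only [Finset.sum_const, Finset.card_univ, Fintype.card_fin, nsmul_eq_mul]
            rw [← mul_assoc, mul_inv_cancel₀ hN'.ne', one_mul]
    have h3 : 0 ≤ C * ∑ k, ∑ l, a k l * ‖u l t - u k t‖ ^ 2 :=
      (sq_nonneg _).trans (hQ (fun i => u i t) i i)
    calc _ ≤ (√(C * ∑ k, ∑ l, a k l * ‖u l t - u k t‖ ^ 2)) ^ 2 := by gcongr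
      _ = _ := Real.sq_sqrt h3
  set V : ℝ → ℝ := fun t => ∑ i, ‖u i t - m t‖ ^ 2 with hV
  set V' : ℝ → ℝ := fun t => ∑ i, 2 * ⟪u i t - m t, u' i t - m' t⟫ with hV'
  have hVd : ∀ t ≥ (0:ℝ), HasDerivAt V (V' t) t := fun t ht =>
    HasDerivAt.fun_sum fun i _ => ((hu i t ht).sub (hmd t ht)).norm_sq
  set c : ℝ := 1 / (N * C) with hcdef
  have hcpos : 0 < c := by positivity
  have hV0 : ∀ t, 0 ≤ V t := fun t => Finset.sum_nonneg fun i _ => sq_nonneg _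
  have hVle : ∀ t, c * V t ≤ ∑ k, ∑ l, a k l * ‖u l t - u k t‖ ^ 2 := by
    intro t
    have : V t ≤ ∑ i : Fin N, C * ∑ k, ∑ l, a k l * ‖u l t - u k t‖ ^ 2 :=
      Finset.sum_le_sum fun i _ => he t i
    simp only [Finset.sum_const, Finset.card_univ, Fintype.card_fin, nsmul_eq_mul] at this
    rw [hcdef, div_mul_eq_mul_div, one_mul, div_le_iff₀ (by positivity)]
    linarith
  have hVb : ∀ t, V' t ≤ - (c / 2) * (V t - 4 / c ^ 2 * ∑ i, ‖p i t‖ ^ 2) := by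
    intro t
    have h1 : V' t = ∑ i, 2 * ⟪u i t - m t, ∑ j, a i j • (u j t - u i t)⟫
        + ∑ i, 2 * ⟪u i t - m t, p i t⟫ - 2 * ⟪∑ i, (u i t - m t), m' t⟫ := by
      simp only [hV', hu', inner_sub_right, inner_add_right, sum_inner, Finset.mul_sum,
        ← Finset.sum_add_distrib, ← Finset.sum_sub_distrib]
      refine Finset.sum_congr rfl fun i _ => ?_
      ring
    rw [h1, hsum, inner_zero_left, aux_dissip a hb (fun i => u i t) (m t)]
    have h2 : ∑ i, 2 * ⟪u i t - m t, p i t⟫ ≤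
        ∑ i, (c / 2 * ‖u i t - m t‖ ^ 2 + 2 / c * ‖p i t‖ ^ 2) := by
      refine Finset.sum_le_sum fun i _ => ?_
      have h3 := real_inner_le_norm (u i t - m t) (p i t)
      have h4 : c / 2 * ‖u i t - m t‖ ^ 2 + 2 / c * ‖p i t‖ ^ 2
          - 2 * (‖u i t - m t‖ * ‖p i t‖)
          = (c / 2) * (‖u i t - m t‖ - 2 / c * ‖p i t‖) ^ 2 := by
        field_simp
        ring
      have h5 : 0 ≤ (c / 2) * (‖u i t - m t‖ - 2 / c * ‖p i t‖) ^ 2 := by positivity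
      linarith
    rw [Finset.sum_add_distrib, ← Finset.mul_sum Finset.univ (fun i => ‖u i t - m t‖ ^ 2),
      ← Finset.mul_sum Finset.univ (fun i => ‖p i t‖ ^ 2)] at h2
    have h6 := hVle t
    have h7 : - (c / 2) * (V t - 4 / c ^ 2 * ∑ i, ‖p i t‖ ^ 2) =
      - (c * V t) + (c / 2 * V t + 2 / c * ∑ i, ‖p i t‖ ^ 2) := by
        field_simp
        ring
    have h8 : V t = ∑ i, ‖u i t - m t‖ ^ 2 := rfl
    rw [← h8] at h2
    rw [h7]
    linarith
  have hP : Tendsto (fun t => 4 / c ^ 2 * ∑ i, ‖p i t‖ ^ 2) atTop (nhds 0) := by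
    have : Tendsto (fun t => 4 / c ^ 2 * ∑ i, ‖p i t‖ ^ 2) atTop
        (nhds (4 / c ^ 2 * ∑ i : Fin N, ‖(0:E)‖ ^ 2)) :=
      (tendsto_finsetSum _ fun i _ => ((hp i).norm.pow 2)).const_mul _
    simpa using this
  have hVt : Tendsto V atTop (nhds 0) := by
    refine aux_compare V V' (fun _ => c / 2) hVd (fun _ _ => by positivity) ?_
      (fun t _ => hV0 t) ?_
    · simp only [intervalIntegral.integral_const, sub_zero, smul_eq_mul]
      exact tendsto_id.atTop_mul_const (by positivity)
    · intro ε hε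
      filter_upwards [hP.eventually (gt_mem_nhds hε)] with t ht
      refine (hVb t).trans ?_
      nlinarith
  intro i
  rw [tendsto_zero_iff_norm_tendsto_zero]
  have hs : Tendsto (fun t => √(V t)) atTop (nhds 0) := by
    simpa using hVt.sqrt
  refine squeeze_zero (fun t => norm_nonneg _) (fun t => ?_) hs
  apply Real.le_sqrt_of_sq_le
  exact Finset.single_le_sum (f := fun i => ‖u i t - m t‖ ^ 2) (fun _ _ => sq_nonneg _)
    (Finset.mem_univ i)

/-- Objective value convergence of the average: along the distributed
projection-free dynamics (Algorithm 1) with initial conditions `x i 0 ∈ Ω`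
and `y i 0 = 0`, the averaged objective value `F (x̄ t)` converges to the
optimal value `min_{x ∈ Ω} F x`, where `x̄ t = (1/N) ∑ i, x i t` and
`F x = (1/N) ∑ i, f i x`. -/
theorem average_objective_convergence
    (n N : ℕ) (hN : 0 < N)
    (a : Fin N → Fin N → ℝ)
    (ha_nonneg : ∀ i j, 0 ≤ a i j)
    (ha_conn : ∀ i j : Fin N, Relation.ReflTransGen (fun p q => 0 < a q p) i j)
    (ha_bal : ∀ i, ∑ j, a i j = ∑ j, a j i)
    (Ω : Set (EuclideanSpace ℝ (Fin n)))
    (hΩconv : Convex ℝ Ω) (hΩcpt : IsCompact Ω) (hΩne : Ω.Nonempty)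
    (f : Fin N → EuclideanSpace ℝ (Fin n) → ℝ) (κ : ℝ) (hκ : 0 < κ)
    (hfconv : ∀ i, ConvexOn ℝ Set.univ (f i))
    (hfdiff : ∀ i, Differentiable ℝ (f i))
    (hflip : ∀ i, ∀ p ∈ Ω, ∀ q ∈ Ω,
      ‖gradient (f i) p - gradient (f i) q‖ ≤ κ * ‖p - q‖)
    (β : ℝ → ℝ)
    (hβpos : ∀ t ≥ (0:ℝ), 0 < β t)
    (hβ0 : Tendsto β atTop (nhds 0))
    (hβdiv : Tendsto (fun t => ∫ τ in (0:ℝ)..t, β τ) atTop atTop)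
    (x y z v : Fin N → ℝ → EuclideanSpace ℝ (Fin n))
    (hx : ∀ i, ∀ t ≥ (0:ℝ), HasDerivAt (x i)
      (∑ j, a i j • (x j t - x i t) + β t • (v i t - x i t)) t)
    (hy : ∀ i, ∀ t ≥ (0:ℝ), HasDerivAt (y i) (∑ j, a i j • (z j t - z i t)) t)
    (hz : ∀ i, ∀ t ≥ (0:ℝ), z i t = y i t + gradient (f i) (x i t))
    (hv : ∀ i, ∀ t ≥ (0:ℝ), v i t ∈ Ω ∧ ∀ w ∈ Ω, ⟪z i t, v i t⟫ ≤ ⟪z i t, w⟫)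
    (hx0 : ∀ i, x i 0 ∈ Ω) (hy0 : ∀ i, y i 0 = 0) :
    Tendsto (fun t => (N:ℝ)⁻¹ * ∑ i, f i ((N:ℝ)⁻¹ • ∑ k, x k t)) atTop
      (nhds (sInf ((fun w => (N:ℝ)⁻¹ * ∑ i, f i w) '' Ω))) := by
  have hN' : (0:ℝ) < N := by exact_mod_cast hN
  -- invariance
  have hxΩ : ∀ t ≥ (0:ℝ), ∀ i, x i t ∈ Ω := by
    intro t ht i
    by_contra hcon
    obtain ⟨l, b, hl1, hl2⟩ := geometric_hahn_banach_closed_point hΩconv hΩcpt.isClosed hcon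
    have := aux_barrier (fun i t => l (x i t))
      (fun i t => l (∑ j, a i j • (x j t - x i t) + β t • (v i t - x i t))) b 0
      (fun i t ht => l.hasFDerivAt.comp_hasDerivAt t (hx i t ht))
      (fun i => (hl1 _ (hx0 i)).le)
      (fun i s hs hle heq => by
        have heq' : l (x i s) = b := heq
        simp only [map_add, map_sum, map_smul, map_sub, smul_eq_mul]
        have h1 : ∑ j, a i j * (l (x j s) - l (x i s)) ≤ 0 :=
          Finset.sum_nonpos fun j _ =>
            mul_nonpos_of_nonneg_of_nonpos (ha_nonneg i j) (by linarith [hle j])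
        have h2 := hl1 _ (hv i s hs).1
        have h3 := hβpos s hs
        nlinarith) t ht i
    linarith
  obtain ⟨D, hD⟩ : ∃ D : ℝ, ∀ p ∈ Ω, ∀ q ∈ Ω, ‖p - q‖ ≤ D := by
    obtain ⟨D, hD⟩ := Metric.isBounded_iff.1 hΩcpt.isBounded
    exact ⟨D, fun p hp q hq => by rw [← dist_eq_norm]; exact hD hp hq⟩
  have hD0 : 0 ≤ D := (norm_nonneg _).trans (hD _ (hx0 ⟨0, hN⟩) _ (hx0 ⟨0, hN⟩))
  -- consensus of x
  have hp0 : ∀ i, Tendsto (fun t => β t • (v i t - x i t)) atTop (nhds 0) := by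
    intro i
    rw [tendsto_zero_iff_norm_tendsto_zero]
    have h1 : Tendsto (fun t => |β t| * D) atTop (nhds 0) := by
      simpa using hβ0.abs.mul_const D
    refine squeeze_zero' (Eventually.of_forall fun t => norm_nonneg _) ?_ h1
    filter_upwards [eventually_ge_atTop 0] with t ht
    rw [norm_smul, Real.norm_eq_abs]
    gcongr
    exact hD _ (hv i t ht).1 _ (hxΩ t ht i)
  have hxc := aux_consensus hN a ha_nonneg ha_conn ha_bal x
    (fun i t => β t • (v i t - x i t)) hx hp0
  set m : ℝ → EuclideanSpace ℝ (Fin n) := fun t => (N:ℝ)⁻¹ • ∑ k, x k t with hm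
  have hlap : ∀ w : Fin N → ℝ → EuclideanSpace ℝ (Fin n), ∀ c : ℝ → EuclideanSpace ℝ (Fin n),
      (∀ i, Tendsto (fun t => w i t - c t) atTop (nhds 0)) →
      ∀ i, Tendsto (fun t => ∑ j, a i j • (w j t - w i t)) atTop (nhds 0) := by
    intro w c hw i
    have h1 : Tendsto (fun t => ∑ j, a i j • ((w j t - c t) - (w i t - c t))) atTop
        (nhds (∑ j, a i j • ((0:EuclideanSpace ℝ (Fin n)) - 0))) :=
      tendsto_finsetSum _ fun j _ => ((hw j).sub (hw i)).const_smul _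
    simpa using h1
  have hxd : ∀ i, Tendsto (fun t => ∑ j, a i j • (x j t - x i t) + β t • (v i t - x i t))
      atTop (nhds 0) := fun i => by simpa using (hlap x m hxc i).add (hp0 i)
  -- the gradient signals
  set g : Fin N → ℝ → EuclideanSpace ℝ (Fin n) :=
    fun i t => gradient (f i) (x i (max t 0)) with hg
  have hgcont : ∀ i, Continuous (g i) := by
    intro i
    have h1 : ContinuousOn (gradient (f i)) Ω := by
      have : LipschitzOnWith ⟨κ, hκ.le⟩ (gradient (f i)) Ω :=
        LipschitzOnWith.of_dist_le_mul fun p hp q hq => by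
          rw [dist_eq_norm, dist_eq_norm]
          exact hflip i p hp q hq
      exact this.continuousOn
    have h2 : Continuous (fun t => x i (max t 0)) := by
      have h3 : ContinuousOn (x i) (Set.Ici 0) := fun s hs =>
        (hx i s hs).continuousAt.continuousWithinAt
      exact h3.comp_continuous (by fun_prop) fun t => le_max_right t 0
    exact h1.comp_continuous h2 fun t => hxΩ _ (le_max_right t 0) i
  have hslow : ∀ i, ∀ ε > 0, ∀ᶠ t in atTop, ∀ s ∈ Set.Icc t (t + 1), ‖g i s - g i t‖ ≤ ε := by
    intro i ε hε
    have hε' : 0 < ε / κ := by positivity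
    have h1 := (tendsto_zero_iff_norm_tendsto_zero.1 (hxd i)).eventually (gt_mem_nhds hε')
    obtain ⟨T, hT⟩ := eventually_atTop.1 (h1.and (eventually_ge_atTop 0))
    have hT0 : 0 ≤ T := (hT T le_rfl).2
    filter_upwards [eventually_ge_atTop T] with t ht s hs
    have ht0 : 0 ≤ t := hT0.trans ht
    have hs0 : 0 ≤ s := ht0.trans hs.1
    have h2 := Convex.norm_image_sub_le_of_norm_hasDerivWithin_le (s := Set.Ici T) (x := t)
      (y := s) (fun r hr => (hx i r (hT0.trans hr)).hasDerivWithinAt)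
      (fun r hr => (hT r hr).1.le) (convex_Ici T) ht (ht.trans hs.1)
    have h3 := hflip i _ (hxΩ s hs0 i) _ (hxΩ t ht0 i)
    simp only [hg, max_eq_left ht0, max_eq_left hs0]
    have h4 : ‖s - t‖ ≤ 1 := by
      rw [Real.norm_of_nonneg (by linarith [hs.1])]
      linarith [hs.2]
    calc _ ≤ _ := h3
      _ ≤ κ * (ε / κ * ‖s - t‖) := by gcongr
      _ ≤ κ * (ε / κ * 1) := by gcongr
      _ = ε := by field_simp
  set G : Fin N → ℝ → EuclideanSpace ℝ (Fin n) := fun i t => ∫ s in t..t + 1, g i s with hG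
  have hGd : ∀ i t, HasDerivAt (G i) (g i (t + 1) - g i t) t := by
    intro i t
    have h1 : G i = fun t => (∫ s in (0:ℝ)..t + 1, g i s) - ∫ s in (0:ℝ)..t, g i s := by
      funext t
      rw [intervalIntegral.integral_interval_sub_left]
      · exact (hgcont i).intervalIntegrable _ _
      · exact (hgcont i).intervalIntegrable _ _
    rw [h1]
    have h2 := ((hgcont i).integral_hasStrictDerivAt 0 (t + 1)).hasDerivAt.comp_add_const t 1
    exact h2.sub ((hgcont i).integral_hasStrictDerivAt 0 t).hasDerivAt
  have hGg : ∀ i, Tendsto (fun t => g i t - G i t) atTop (nhds 0) := by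
    intro i
    rw [Metric.tendsto_nhds]
    intro ε hε
    filter_upwards [hslow i (ε / 2) (by linarith)] with t ht
    rw [dist_zero_right, norm_sub_rev]
    have h1 : G i t - g i t = ∫ s in t..t + 1, (g i s - g i t) := by
      rw [intervalIntegral.integral_sub ((hgcont i).intervalIntegrable _ _)
        intervalIntegrable_const]
      simp [hG]
    rw [h1]
    have h2 := intervalIntegral.norm_integral_le_of_norm_le_const (a := t) (b := t + 1)
      (f := fun s => g i s - g i t) (C := ε / 2) (fun s hs => by
        rw [Set.uIoc_of_le (by linarith)] at hs
        exact ht s ⟨hs.1.le, hs.2⟩)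
    simp only [add_sub_cancel_left, abs_one, mul_one] at h2
    linarith
  have hGd0 : ∀ i, Tendsto (fun t => g i (t + 1) - g i t) atTop (nhds 0) := by
    intro i
    rw [Metric.tendsto_nhds]
    intro ε hε
    filter_upwards [hslow i (ε / 2) (by linarith)] with t ht
    rw [dist_zero_right]
    have := ht (t + 1) ⟨by linarith, le_rfl⟩
    linarith
  have hzg : ∀ i, ∀ t ≥ (0:ℝ), z i t = y i t + g i t := by
    intro i t ht
    rw [hz i t ht]
    simp only [hg, max_eq_left ht]
  -- consensus of the smoothed tracking variables
  have hzc := aux_consensus hN a ha_nonneg ha_conn ha_bal (fun i t => y i t + G i t)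
    (fun i t => ∑ j, a i j • ((g j t - G j t) - (g i t - G i t)) + (g i (t + 1) - g i t))
    (fun i t ht => by
      have h1 := (hy i t ht).add (hGd i t)
      refine (HasDerivAt.congr_deriv h1 ?_ : HasDerivAt (fun t => y i t + G i t) _ t)
      symm
      rw [← add_assoc, ← Finset.sum_add_distrib]
      congr 1
      refine Finset.sum_congr rfl fun j _ => ?_
      rw [← smul_add, hzg i t ht, hzg j t ht]
      congr 1
      abel)
    (fun i => by
      simpa using (hlap (fun i t => g i t - G i t) (fun _ => 0) (by simpa using hGg) i).add
        (hGd0 i))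
  have hysum : ∀ t ≥ (0:ℝ), ∑ i, y i t = 0 := by
    intro t ht
    have h1 : ∀ s ≥ (0:ℝ), HasDerivAt (fun t => ∑ i, y i t) 0 s := by
      intro s hs
      have := HasDerivAt.fun_sum (u := Finset.univ) fun i _ => hy i s hs
      rwa [aux_lap_sum a ha_bal (fun i => z i s)] at this
    have h2 := Convex.norm_image_sub_le_of_norm_hasDerivWithin_le (s := Set.Ici (0:ℝ)) (x := 0)
      (y := t) (C := 0) (fun r hr => (h1 r hr).hasDerivWithinAt)
      (fun r hr => by simp) (convex_Ici 0) (Set.mem_Ici.2 le_rfl) ht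
    simpa [hy0] using h2
  have hmΩ : ∀ t ≥ (0:ℝ), m t ∈ Ω := by
    intro t ht
    simp only [hm, Finset.smul_sum]
    refine hΩconv.sum_mem (fun _ _ => by positivity) ?_ fun i _ => hxΩ t ht i
    simp [hN'.ne']
  set dF : ℝ → EuclideanSpace ℝ (Fin n) :=
    fun t => (N:ℝ)⁻¹ • ∑ k, gradient (f k) (m t) with hdF
  have hgF : ∀ i, Tendsto (fun t => g i t - gradient (f i) (m t)) atTop (nhds 0) := by
    intro i
    rw [tendsto_zero_iff_norm_tendsto_zero]
    have h1 : Tendsto (fun t => κ * ‖x i t - m t‖) atTop (nhds 0) := by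
      simpa using (hxc i).norm.const_mul κ
    refine squeeze_zero' (Eventually.of_forall fun t => norm_nonneg _) ?_ h1
    filter_upwards [eventually_ge_atTop 0] with t ht
    simp only [hg, max_eq_left ht]
    exact hflip i _ (hxΩ t ht i) _ (hmΩ t ht)
  have hzF : ∀ i, Tendsto (fun t => z i t - dF t) atTop (nhds 0) := by
    intro i
    have h1 : Tendsto (fun t => (N:ℝ)⁻¹ • ∑ k, (g k t - G k t)) atTop
        (nhds ((N:ℝ)⁻¹ • ∑ k : Fin N, (0 : EuclideanSpace ℝ (Fin n)))) :=
      (tendsto_finsetSum _ fun k _ => hGg k).const_smul _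
    have h2 : Tendsto (fun t => (N:ℝ)⁻¹ • ∑ k, (g k t - gradient (f k) (m t))) atTop
        (nhds ((N:ℝ)⁻¹ • ∑ k : Fin N, (0 : EuclideanSpace ℝ (Fin n)))) :=
      (tendsto_finsetSum _ fun k _ => hgF k).const_smul _
    have h3 := (((hzc i).add (hGg i)).sub h1).add h2
    simp only [Finset.sum_const_zero, smul_zero, add_zero, sub_zero] at h3
    refine h3.congr' ?_
    filter_upwards [eventually_ge_atTop 0] with t ht
    simp only [Finset.sum_add_distrib, hysum t ht, Finset.sum_sub_distrib, smul_sub, hdF,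
      hzg i t ht, zero_add]
    abel
  -- the objective
  set F : EuclideanSpace ℝ (Fin n) → ℝ := fun w => (N:ℝ)⁻¹ * ∑ i, f i w with hF
  have hFcont : Continuous F := by
    have : ∀ i, Continuous (f i) := fun i => (hfdiff i).continuous
    fun_prop
  obtain ⟨ws, hws, hmin⟩ := hΩcpt.exists_isMinOn hΩne hFcont.continuousOn
  have hsInf : sInf (F '' Ω) = F ws := by
    apply IsLeast.csInf_eq
    exact ⟨⟨ws, hws, rfl⟩, by rintro _ ⟨w, hw, rfl⟩; exact hmin hw⟩
  rw [hsInf]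
  have hmd : ∀ t ≥ (0:ℝ), HasDerivAt m (β t • ((N:ℝ)⁻¹ • ∑ k, (v k t - m t))) t := by
    intro t ht
    have h1 := (HasDerivAt.fun_sum (u := Finset.univ) fun i _ => hx i t ht).const_smul (N:ℝ)⁻¹
    refine (HasDerivAt.congr_deriv h1 ?_ : HasDerivAt m _ t)
    symm
    rw [Finset.sum_add_distrib, aux_lap_sum a ha_bal (fun i => x i t), zero_add,
      ← Finset.smul_sum, smul_comm]
    congr 2
    simp only [Finset.sum_sub_distrib, Finset.sum_const, Finset.card_univ, Fintype.card_fin, hm]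
    rw [← Nat.cast_smul_eq_nsmul ℝ, smul_smul, mul_inv_cancel₀ hN'.ne', one_smul]
  have hFd : ∀ t ≥ (0:ℝ), HasDerivAt (fun t => F (m t) - F ws)
      ⟪dF t, β t • ((N:ℝ)⁻¹ • ∑ k, (v k t - m t))⟫ t := by
    intro t ht
    have h1 : ∀ i, HasDerivAt (fun t => f i (m t))
        ⟪gradient (f i) (m t), β t • ((N:ℝ)⁻¹ • ∑ k, (v k t - m t))⟫ t := fun i =>
      (hfdiff i (m t)).hasGradientAt.hasFDerivAt.comp_hasDerivAt t (hmd t ht)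
    have h2 := ((HasDerivAt.fun_sum (u := Finset.univ) fun i _ => h1 i).const_mul
      (N:ℝ)⁻¹).sub_const (F ws)
    refine HasDerivAt.congr_deriv h2 ?_
    symm
    rw [hdF, real_inner_smul_left, sum_inner]
  have hFineq : ∀ t, ⟪dF t, ws - m t⟫ ≤ F ws - F (m t) := by
    intro t
    simp only [hdF, hF]
    rw [real_inner_smul_left, sum_inner, ← mul_sub, ← Finset.sum_sub_distrib]
    gcongr with i _
    exact aux_grad_ineq (f i) (hfconv i) (hfdiff i) _ _
  have hstep : ∀ t ≥ (0:ℝ), ⟪dF t, β t • ((N:ℝ)⁻¹ • ∑ k, (v k t - m t))⟫ ≤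
      - β t * ((F (m t) - F ws) - (N:ℝ)⁻¹ * ∑ k, ‖z k t - dF t‖ * D) := by
    intro t ht
    have h1 : ∀ k, ⟪dF t, v k t - m t⟫ ≤ (F ws - F (m t)) + ‖z k t - dF t‖ * D := by
      intro k
      have e1 : ⟪dF t, v k t - m t⟫ = ⟪dF t, ws - m t⟫ + (⟪z k t, v k t⟫ - ⟪z k t, ws⟫)
          + ⟪z k t - dF t, ws - v k t⟫ := by
        simp only [inner_sub_left, inner_sub_right]
        ring
      have e2 := (hv k t ht).2 ws hws
      have e3 : ⟪z k t - dF t, ws - v k t⟫ ≤ ‖z k t - dF t‖ * D :=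
        (real_inner_le_norm _ _).trans (by gcongr; exact hD _ hws _ (hv k t ht).1)
      have e4 := hFineq t
      linarith
    have h2 : ∑ k, ⟪dF t, v k t - m t⟫ ≤
        ∑ k : Fin N, ((F ws - F (m t)) + ‖z k t - dF t‖ * D) :=
      Finset.sum_le_sum fun k _ => h1 k
    rw [Finset.sum_add_distrib, Finset.sum_const, Finset.card_univ, Fintype.card_fin,
      nsmul_eq_mul] at h2
    rw [real_inner_smul_right, real_inner_smul_right, inner_sum]
    have h3 := hβpos t ht
    calc _ ≤ β t * ((N:ℝ)⁻¹ * (N * (F ws - F (m t)) + ∑ k, ‖z k t - dF t‖ * D)) := by gcongr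
      _ = _ := by
        rw [mul_add, ← mul_assoc (N:ℝ)⁻¹ (N:ℝ), inv_mul_cancel₀ hN'.ne', one_mul]
        ring
  have herr : Tendsto (fun t => (N:ℝ)⁻¹ * ∑ k, ‖z k t - dF t‖ * D) atTop (nhds 0) := by
    have h1 : Tendsto (fun t => (N:ℝ)⁻¹ * ∑ k, ‖z k t - dF t‖ * D) atTop
        (nhds ((N:ℝ)⁻¹ * ∑ k : Fin N, ‖(0 : EuclideanSpace ℝ (Fin n))‖ * D)) :=
      (tendsto_finsetSum _ fun k _ => (hzF k).norm.mul_const D).const_mul _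
    simpa using h1
  have hfin := aux_compare (fun t => F (m t) - F ws) _ β hFd hβpos hβdiv
    (fun t ht => sub_nonneg.2 (hmin (hmΩ t ht)))
    (fun ε hε => by
      filter_upwards [herr.eventually (gt_mem_nhds hε), eventually_ge_atTop 0] with t h1 h2
      refine (hstep t h2).trans ?_
      have h3 := hβpos t h2
      nlinarith)
  simpa using hfin.add_const (F ws)
end
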